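/- Let Ω be a simple Toeplitz subshift defined by coding sequences (a_k) and (n_k) whose eventual alphabet has at least two letters. Then every locally constant A : Ω → SL(2,ℝ) is uniform: there is Λ ∈ ℝ such that (1/n) log‖A(n,ω)‖ → Λ as n → ∞ uniformly in ω ∈ Ω. -/

import Mathlib

open Filter Topology MeasureTheory

noncomputable section

abbrev SL2 := Matrix.SpecialLinearGroup (Fin 2) ℝ

/-- Operator norm of a 2×2 real matrix acting on Euclidean ℝ². -/
def matNorm (M : Matrix (Fin 2) (Fin 2) ℝ) : ℝ :=
  ‖LinearMap.toContinuousLinearMap (Matrix.toEuclideanLin M)‖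

/-- Norm of an element of SL(2,ℝ). -/
def slNorm (M : SL2) : ℝ := matNorm (M : Matrix (Fin 2) (Fin 2) ℝ)

/-- Action of an SL(2,ℝ) matrix on a euclidean vector. -/
def slAct (M : SL2) (v : EuclideanSpace ℝ (Fin 2)) : EuclideanSpace ℝ (Fin 2) :=
  Matrix.toEuclideanLin (M : Matrix (Fin 2) (Fin 2) ℝ) v

variable {𝒜 : Type*}

/-- The shift by `k` on two-sided sequences; `shift 1` is the left shift `T`. -/
def shift (k : ℤ) (ω : ℤ → 𝒜) : ℤ → 𝒜 := fun n => ω (n + k)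

/-- `Ω ⊆ 𝒜^ℤ` is a subshift: nonempty, closed, invariant under the shift and its inverse. -/
structure IsSubshift [TopologicalSpace 𝒜] (Ω : Set (ℤ → 𝒜)) : Prop where
  nonempty : Ω.Nonempty
  closed : IsClosed Ω
  shift_mem : ∀ ω ∈ Ω, shift 1 ω ∈ Ω
  shift_neg_mem : ∀ ω ∈ Ω, shift (-1) ω ∈ Ω

/-- The word `ω(k) ω(k+1) ⋯ ω(k+n-1)`. -/
def word (ω : ℤ → 𝒜) (k : ℤ) (n : ℕ) : List 𝒜 := (List.range n).map fun i => ω (k + i)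

/-- `v` occurs in `ω` at position `k`. -/
def occursAt (v : List 𝒜) (ω : ℤ → 𝒜) (k : ℤ) : Prop := v = word ω k v.length

/-- The words of length `n` occurring in elements of `Ω`. -/
def WordsN (Ω : Set (ℤ → 𝒜)) (n : ℕ) : Set (List 𝒜) :=
  {v | ∃ ω ∈ Ω, ∃ k : ℤ, v = word ω k n}

/-- The (nonempty) finite words occurring in elements of `Ω`. -/
def Words (Ω : Set (ℤ → 𝒜)) : Set (List 𝒜) :=
  {v | 1 ≤ v.length ∧ v ∈ WordsN Ω v.length}

/-- `A` is locally constant on `Ω`: its value depends only on a finite window around 0. -/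
def LocConstOn (Ω : Set (ℤ → 𝒜)) {β : Type*} (A : (ℤ → 𝒜) → β) : Prop :=
  ∃ N : ℕ, ∀ ω ∈ Ω, ∀ ρ ∈ Ω, (∀ i : ℤ, |i| ≤ (N : ℤ) → ω i = ρ i) → A ω = A ρ

/-- The positive part of the cocycle: `cocycleP A n ω = A(T^{n-1}ω) ⋯ A(ω)`. -/
def cocycleP (A : (ℤ → 𝒜) → SL2) : ℕ → (ℤ → 𝒜) → SL2
  | 0, _ => 1
  | n + 1, ω => A (shift n ω) * cocycleP A n ω

/-- The full cocycle over the shift, `n ∈ ℤ`. -/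
def cocycle (A : (ℤ → 𝒜) → SL2) (n : ℤ) (ω : ℤ → 𝒜) : SL2 :=
  if 0 ≤ n then cocycleP A n.toNat ω else (cocycleP A (-n).toNat (shift n ω))⁻¹

/-- `A` is uniform on `Ω`: `(1/n) log‖A(n,ω)‖` converges uniformly on `Ω`. -/
def IsUniform (Ω : Set (ℤ → 𝒜)) (A : (ℤ → 𝒜) → SL2) : Prop :=
  ∃ Λ : ℝ, TendstoUniformlyOn
    (fun (n : ℕ) (ω : ℤ → 𝒜) => Real.log (slNorm (cocycle A n ω)) / n)
    (fun _ => Λ) atTop Ω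

/-- The number of occurrences of `v` in `ω(1)⋯ω(n)`. -/
def occCount (v : List 𝒜) (ω : ℤ → 𝒜) (n : ℕ) : ℕ :=
  Set.ncard {k : ℤ | 1 ≤ k ∧ k + v.length ≤ (n : ℤ) + 1 ∧ occursAt v ω k}

/-- Uniform existence of word frequencies (unique ergodicity). -/
def UniformWordFreq (Ω : Set (ℤ → 𝒜)) : Prop :=
  ∀ v ∈ Words Ω, ∃ ν : ℝ, TendstoUniformlyOn
    (fun (n : ℕ) (ω : ℤ → 𝒜) => (occCount v ω n : ℝ) / n) (fun _ => ν) atTop Ω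

/-- Minimality: every orbit is dense in `Ω`. -/
def IsMinimalSubshift [TopologicalSpace 𝒜] (Ω : Set (ℤ → 𝒜)) : Prop :=
  ∀ ω ∈ Ω, ∀ ρ ∈ Ω, ρ ∈ closure {σ : ℤ → 𝒜 | ∃ k : ℤ, σ = shift k ω}

/-- Condition (α): for all large `n`, the words of length `n` of `Ω` are exactly the
words `lead j (-k+1) ⋯ lead j (-k+n)`, `0 ≤ k ≤ n`, of the leading words. -/
def CondAlpha (Ω : Set (ℤ → 𝒜)) {r : ℕ} (lead : Fin r → (ℤ → 𝒜)) : Prop :=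
  (∀ j, lead j ∈ Ω) ∧ ∃ N : ℕ, ∀ n : ℕ, N ≤ n →
    WordsN Ω n = {v | ∃ j : Fin r, ∃ k : ℕ, k ≤ n ∧ v = word (lead j) (1 - (k : ℤ)) n}

/-- Condition (β): for every locally constant cocycle the Lyapunov limits along the
leading words exist in both time directions and all have the same value. -/
def CondBeta (Ω : Set (ℤ → 𝒜)) {r : ℕ} (lead : Fin r → (ℤ → 𝒜)) : Prop :=
  ∀ A : (ℤ → 𝒜) → SL2, LocConstOn Ω A → ∃ Λ : ℝ, ∀ j : Fin r,
    Tendsto (fun n : ℕ => Real.log (slNorm (cocycle A n (lead j))) / n) atTop (𝓝 Λ) ∧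
    Tendsto (fun n : ℕ => Real.log (slNorm (cocycle A (-(n : ℤ)) (lead j))) / n) atTop (𝓝 Λ)

/-- Condition (γ): along the leading words, for every locally constant cocycle and every
nonzero vector, at most one of the two one-sided exponents is negative. -/
def CondGamma (Ω : Set (ℤ → 𝒜)) {r : ℕ} (lead : Fin r → (ℤ → 𝒜)) : Prop :=
  ∀ A : (ℤ → 𝒜) → SL2, LocConstOn Ω A → ∀ j : Fin r,
    ∀ v : EuclideanSpace ℝ (Fin 2), v ≠ 0 →
    ¬ (limsup (fun n : ℕ => Real.log ‖slAct (cocycle A n (lead j)) v‖ / n) atTop < 0 ∧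
       limsup (fun n : ℕ => Real.log ‖slAct (cocycle A (-(n : ℤ)) (lead j)) v‖ / n) atTop < 0)

/-- The leading sequence condition (LSC). -/
def SatisfiesLSC (Ω : Set (ℤ → 𝒜)) : Prop :=
  ∃ (r : ℕ) (lead : Fin r → (ℤ → 𝒜)), CondAlpha Ω lead ∧ CondBeta Ω lead ∧ CondGamma Ω lead

/-- `F` is subadditive on the words of `Ω`. -/
def SubadditiveOn (Ω : Set (ℤ → 𝒜)) (F : List 𝒜 → ℝ) : Prop :=
  ∀ x y : List 𝒜, x ∈ Words Ω → y ∈ Words Ω → (x ++ y) ∈ Words Ω → F (x ++ y) ≤ F x + F y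

/-- `Fb` is the asymptotic mean `lim_n max { F x / n : x ∈ W(Ω)_n }` of `F`. -/
def IsAsympMean (Ω : Set (ℤ → 𝒜)) (F : List 𝒜 → ℝ) (Fb : ℝ) : Prop :=
  Tendsto (fun n : ℕ => sSup ((fun x => F x / n) '' WordsN Ω n)) atTop (𝓝 Fb)

/-- Maximal number of pairwise disjoint occurrences of `v` in `ω(1)⋯ω(n)`. -/
def disjCount (v : List 𝒜) (ω : ℤ → 𝒜) (n : ℕ) : ℕ :=
  sSup {m : ℕ | ∃ S : Finset ℤ, S.card = m ∧
    (∀ k ∈ S, 1 ≤ k ∧ k + v.length ≤ (n : ℤ) + 1 ∧ occursAt v ω k) ∧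
    (∀ k ∈ S, ∀ l ∈ S, k ≠ l → (v.length : ℤ) ≤ |k - l|)}

/-- Condition (PQ) for the one-sided word `p(1)p(2)⋯`. -/
def CondPQ (p : ℤ → 𝒜) : Prop :=
  ∃ c : ℝ, 0 < c ∧ ∀ m : ℕ, 1 ≤ m →
    c ≤ liminf (fun n : ℕ => (m : ℝ) / n * disjCount (word p 1 m) p n) atTop

/-- ℓ²(ℤ) over the reals. -/
abbrev Ell2Z : Type := lp (fun _ : ℤ => ℝ) 2

/-- `H` acts as the Jacobi operator with coefficients `f, g` at `ω`. -/
def IsJacobiAt (f g : (ℤ → 𝒜) → ℝ) (ω : ℤ → 𝒜) (H : Ell2Z →L[ℝ] Ell2Z) : Prop :=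
  ∀ u : Ell2Z, ∀ n : ℤ,
    (H u : ∀ _ : ℤ, ℝ) n =
      f (shift n ω) * (u : ∀ _ : ℤ, ℝ) (n - 1) + f (shift (n + 1) ω) * (u : ∀ _ : ℤ, ℝ) (n + 1)
        + g (shift n ω) * (u : ∀ _ : ℤ, ℝ) n

/-- The pair `(f,g)` is periodic on `Ω`. -/
def PeriodicPair (Ω : Set (ℤ → 𝒜)) (f g : (ℤ → 𝒜) → ℝ) : Prop :=
  ∃ P : ℕ, 1 ≤ P ∧ ∀ ω ∈ Ω, f (shift (P : ℤ) ω) = f ω ∧ g (shift (P : ℤ) ω) = g ω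

/-- `S ⊆ ℝ` is a Cantor set of Lebesgue measure zero: compact, empty interior,
no isolated points, Lebesgue measure zero. -/
def IsMeasureZeroCantor (S : Set ℝ) : Prop :=
  IsCompact S ∧ interior S = ∅ ∧ Perfect S ∧ volume S = 0

/-- `n` copies of `x` separated by `n-1` copies of the letter `l`. -/
def sepJoin (x : List 𝒜) (l : 𝒜) (m : ℕ) : List 𝒜 :=
  (List.replicate (m - 1) (x ++ [l])).flatten ++ x

/-- `Blk a nseq (k+1)` is the block `block(k)` of the simple Toeplitz construction
(with `Blk a nseq 0 = block(-1) = ε`). -/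
def Blk (a : ℕ → 𝒜) (nseq : ℕ → ℕ) : ℕ → List 𝒜
  | 0 => []
  | k + 1 => sepJoin (Blk a nseq k) (a k) (nseq k)

/-- `p(1)p(2)⋯` is the one-sided word `block(∞)`: every block is a prefix of it. -/
def IsBlockInf (a : ℕ → 𝒜) (nseq : ℕ → ℕ) (p : ℤ → 𝒜) : Prop :=
  ∀ k : ℕ, word p 1 (Blk a nseq k).length = Blk a nseq k

/-- The simple Toeplitz subshift generated by `block(∞) = p(1)p(2)⋯`: all two-sided
sequences whose finite subwords all occur in `block(∞)`. -/
def toeplitzΩ (p : ℤ → 𝒜) : Set (ℤ → 𝒜) :=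
  {ω | ∀ (i : ℤ) (n : ℕ), ∃ l : ℤ, 1 ≤ l ∧ word ω i n = word p l n}

/-- The eventual alphabet: letters occurring infinitely often in `(a_k)`. -/
def EvAlph (a : ℕ → 𝒜) : Set 𝒜 := {x | ∀ K : ℕ, ∃ k, K ≤ k ∧ a k = x}

/-- The leading word `p^R v | p`: equals `p(n+1)` for `n ≥ 0`, carries the word `v` on
positions `-|v|, …, -1`, and equals `p(-(n+|v|))` for `n < -|v|`. -/
def leadWordGen (p : ℤ → 𝒜) (v : List 𝒜) : ℤ → 𝒜 := fun n =>
  if 0 ≤ n then p (n + 1)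
  else if -(v.length : ℤ) ≤ n then v.getD (n + v.length).toNat (p 1)
  else p (-(n + v.length))

/-- The Gauss map. -/
def gaussMap (x : ℝ) : ℝ := 1 / x - ⌊1 / x⌋

/-- `cfSeq α n` is the continued fraction coefficient `a_{n+1}` of `α`. -/
def cfSeq (α : ℝ) (n : ℕ) : ℕ := ⌊1 / (gaussMap^[n] α)⌋₊

/-- The standard Sturmian words: `sturmW α (n+1) = s_n`, `sturmW α 0 = s_{-1} = 1`,
`sturmW α 1 = s_0 = 0`, `s_1 = s_0^{a_1 - 1} s_{-1}`, `s_n = s_{n-1}^{a_n} s_{n-2}`. -/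
def sturmW (α : ℝ) : ℕ → List (Fin 2)
  | 0 => [1]
  | 1 => [0]
  | 2 => List.replicate (cfSeq α 0 - 1) (0 : Fin 2) ++ [1]
  | n + 3 => (List.replicate (cfSeq α (n + 1)) (sturmW α (n + 2))).flatten ++ sturmW α (n + 1)

/-- The Sturmian subshift with rotation number `α`: all two-sided sequences whose finite
subwords occur in some `s_n`. -/
def sturmΩ (α : ℝ) : Set (ℤ → Fin 2) :=
  {ω | ∀ (i : ℤ) (n : ℕ), ∃ m : ℕ, word ω i n <:+: sturmW α m}

/-- The positive cocycle of a map `A` over a transformation `T`: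
`cocycleH T A n ω = A(T^{n-1}ω) ⋯ A(ω)`. -/
def cocycleH {Ω : Type*} (T : Ω → Ω) (A : Ω → SL2) : ℕ → Ω → SL2
  | 0, _ => 1
  | n + 1, ω => A (T^[n] ω) * cocycleH T A n ω

end

/-!
The growth rate is the infimum `Λ` of the growth rates of the products over the blocks. Cutting a
long window at the multiples of a period gives `Λ` as a uniform upper bound. Along `block(∞)` it is
also a lower bound: up to a letter, the product over a block is the `n_k`-th power of the product
over the preceding one, and by Cayley–Hamilton the powers of a matrix in `SL(2,ℝ)` grow at a rate
governed by its trace.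

If `Λ > 0`, then some direction `v` is contracted exponentially by the products over
`block(∞) = p(1)p(2)⋯`, and some direction `u` by the inverse products over the reflected word to
the left of the origin. Around its most divisible position every window of a Toeplitz sequence
looks like a window around the origin, with some letter `x` in the center, so its product can only
be small if `x` maps the direction `u` to `v`. This is impossible when `x` recurs infinitely often,
by Gordon's argument applied to the two copies of a block around an occurrence of `x`.

A locally constant cocycle reduces to one depending on a single letter: the sequence of the letters
at the multiples of a large period is again a Toeplitz sequence, and each of these letters
determines the matrices in the period around it.
-/

/-! ### The norm on `SL(2,ℝ)` -/

local notation "ℝ²" => EuclideanSpace ℝ (Fin 2)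

section Norm

open scoped Matrix.Norms.L2Operator

theorem slNorm_eq_l2_opNorm (g : SL2) : slNorm g = ‖(g : Matrix (Fin 2) (Fin 2) ℝ)‖ := rfl

theorem slNorm_mul_le (g h : SL2) : slNorm (g * h) ≤ slNorm g * slNorm h := by
  simpa only [slNorm_eq_l2_opNorm, Matrix.SpecialLinearGroup.coe_mul] using norm_mul_le _ _

theorem slNorm_one : slNorm 1 = 1 := by
  simp only [slNorm_eq_l2_opNorm, Matrix.SpecialLinearGroup.coe_one, norm_one]

theorem slNorm_inv (g : SL2) : slNorm g⁻¹ = slNorm g := by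
  let J : Matrix (Fin 2) (Fin 2) ℝ := !![0, 1; -1, 0]
  have hJ : J ∈ unitary (Matrix (Fin 2) (Fin 2) ℝ) := by
    constructor <;> ext i j <;> fin_cases i <;> fin_cases j <;>
      simp [J, Matrix.mul_apply, Fin.sum_univ_two]
  have hinv : ((g⁻¹ : SL2) : Matrix (Fin 2) (Fin 2) ℝ) =
      J * ((g : Matrix (Fin 2) (Fin 2) ℝ).conjTranspose * star J) := by
    rw [Matrix.SpecialLinearGroup.SL2_inv_expl]
    ext i j
    fin_cases i <;> fin_cases j <;> simp [J, Matrix.mul_apply, Fin.sum_univ_two]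
  rw [slNorm_eq_l2_opNorm, hinv, CStarRing.norm_mem_unitary_mul _ hJ,
    CStarRing.norm_mul_mem_unitary _ (Unitary.star_mem hJ), Matrix.l2_opNorm_conjTranspose,
    slNorm_eq_l2_opNorm]

end Norm

theorem norm_slAct_le (g : SL2) (v : ℝ²) : ‖slAct g v‖ ≤ slNorm g * ‖v‖ :=
  (LinearMap.toContinuousLinearMap
    (Matrix.toEuclideanLin (g : Matrix (Fin 2) (Fin 2) ℝ))).le_opNorm v

theorem one_le_slNorm (g : SL2) : 1 ≤ slNorm g := by
  have h : 1 ≤ slNorm g * slNorm g :=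
    calc 1 = slNorm (g * g⁻¹) := by rw [mul_inv_cancel, slNorm_one]
      _ ≤ slNorm g * slNorm g⁻¹ := slNorm_mul_le _ _
      _ = slNorm g * slNorm g := by rw [slNorm_inv]
  have hg : 0 ≤ slNorm g := norm_nonneg _
  nlinarith

theorem slNorm_pos (g : SL2) : 0 < slNorm g := one_pos.trans_le (one_le_slNorm g)

theorem slAct_one (v : ℝ²) : slAct 1 v = v := by
  simp [slAct, Matrix.toEuclideanLin]

theorem slAct_mul (g h : SL2) (v : ℝ²) : slAct (g * h) v = slAct g (slAct h v) := by
  simp [slAct, Matrix.toEuclideanLin, Matrix.toLpLin_apply]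

theorem slAct_smul (g : SL2) (c : ℝ) (v : ℝ²) : slAct g (c • v) = c • slAct g v :=
  map_smul _ _ _

theorem slAct_add (g : SL2) (v w : ℝ²) : slAct g (v + w) = slAct g v + slAct g w :=
  map_add _ _ _

theorem slAct_inv_slAct (g : SL2) (v : ℝ²) : slAct g⁻¹ (slAct g v) = v := by
  rw [← slAct_mul, inv_mul_cancel, slAct_one]

/-- The logarithm of the operator norm, a length function on `SL(2,ℝ)`: nonnegative, subadditive
and invariant under inversion. -/
noncomputable def logNorm (g : SL2) : ℝ := Real.log (slNorm g)

theorem logNorm_nonneg (g : SL2) : 0 ≤ logNorm g := Real.log_nonneg (one_le_slNorm g)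

theorem exp_logNorm (g : SL2) : Real.exp (logNorm g) = slNorm g := Real.exp_log (slNorm_pos g)

theorem logNorm_one : logNorm 1 = 0 := by rw [logNorm, slNorm_one, Real.log_one]

theorem logNorm_inv (g : SL2) : logNorm g⁻¹ = logNorm g := by rw [logNorm, logNorm, slNorm_inv]

theorem logNorm_mul_le (g h : SL2) : logNorm (g * h) ≤ logNorm g + logNorm h := by
  rw [logNorm, logNorm, logNorm, ← Real.log_mul (slNorm_pos g).ne' (slNorm_pos h).ne']
  exact Real.log_le_log (slNorm_pos _) (slNorm_mul_le g h)

theorem logNorm_left_le (g h : SL2) : logNorm g ≤ logNorm (g * h) + logNorm h := by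
  simpa only [mul_inv_cancel_right, logNorm_inv] using logNorm_mul_le (g * h) h⁻¹

theorem logNorm_right_le (g h : SL2) : logNorm h ≤ logNorm (g * h) + logNorm g := by
  simpa only [inv_mul_cancel_left, logNorm_inv, add_comm] using logNorm_mul_le g⁻¹ (g * h)

section CayleyHamilton

open Matrix (trace)

theorem coe_add_coe_inv_eq_trace_smul_one (g : SL2) :
    (g : Matrix (Fin 2) (Fin 2) ℝ) + (g⁻¹ : SL2) = trace (g : Matrix (Fin 2) (Fin 2) ℝ) • 1 := by
  rw [Matrix.SpecialLinearGroup.coe_inv, Matrix.adjugate_fin_two, Matrix.trace_fin_two]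
  ext i j
  fin_cases i <;> fin_cases j <;> simp [add_comm]

theorem slAct_add_slAct_inv (g : SL2) (v : ℝ²) :
    slAct g v + slAct g⁻¹ v = trace (g : Matrix (Fin 2) (Fin 2) ℝ) • v := by
  simp only [slAct, ← LinearMap.add_apply, ← map_add, coe_add_coe_inv_eq_trace_smul_one, map_smul]
  simp [Matrix.toEuclideanLin]

theorem coe_pow_add_two (g : SL2) (n : ℕ) :
    ((g ^ (n + 2) : SL2) : Matrix (Fin 2) (Fin 2) ℝ) + (g ^ n : SL2) =
      trace (g : Matrix (Fin 2) (Fin 2) ℝ) • ((g ^ (n + 1) : SL2) : Matrix (Fin 2) (Fin 2) ℝ) :=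
  calc _ = ((g : Matrix (Fin 2) (Fin 2) ℝ) + (g⁻¹ : SL2)) * (g ^ (n + 1) : SL2) := by
        rw [add_mul, ← Matrix.SpecialLinearGroup.coe_mul, ← Matrix.SpecialLinearGroup.coe_mul,
          ← pow_succ', pow_succ' g n, inv_mul_cancel_left]
    _ = _ := by rw [coe_add_coe_inv_eq_trace_smul_one, smul_mul_assoc, one_mul]

open scoped Matrix.Norms.L2Operator in
theorem slNorm_pow_add_two_le (g : SL2) (n : ℕ) :
    slNorm (g ^ (n + 2)) ≤
      |trace (g : Matrix (Fin 2) (Fin 2) ℝ)| * slNorm (g ^ (n + 1)) + slNorm (g ^ n) := by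
  simp only [slNorm_eq_l2_opNorm, eq_sub_of_add_eq (coe_pow_add_two g n)]
  exact (norm_sub_le _ _).trans_eq (by rw [norm_smul, Real.norm_eq_abs])

open scoped Matrix.Norms.L2Operator in
theorem abs_trace_mul_slNorm_pow_succ_le (g : SL2) (n : ℕ) :
    |trace (g : Matrix (Fin 2) (Fin 2) ℝ)| * slNorm (g ^ (n + 1)) ≤
      slNorm (g ^ (n + 2)) + slNorm (g ^ n) := by
  simp only [slNorm_eq_l2_opNorm, ← Real.norm_eq_abs, ← norm_smul, ← coe_pow_add_two]
  exact norm_add_le _ _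

open scoped Matrix.Norms.L2Operator in
theorem abs_trace_le (g : SL2) : |trace (g : Matrix (Fin 2) (Fin 2) ℝ)| ≤ 2 * slNorm g := by
  have h := congrArg norm (coe_add_coe_inv_eq_trace_smul_one g)
  rw [norm_smul, norm_one, mul_one, Real.norm_eq_abs] at h
  calc |trace (g : Matrix (Fin 2) (Fin 2) ℝ)| ≤ slNorm g + slNorm g⁻¹ := h ▸ norm_add_le _ _
    _ = 2 * slNorm g := by rw [slNorm_inv]; ring

theorem slNorm_pow_succ_le (g : SL2) (n : ℕ) :
    slNorm (g ^ (n + 1)) ≤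
      (2 * max 1 |trace (g : Matrix (Fin 2) (Fin 2) ℝ)|) ^ n * slNorm g := by
  set ρ := max 1 |trace (g : Matrix (Fin 2) (Fin 2) ℝ)|
  have hρ : 1 ≤ ρ := le_max_left _ _
  have hb := one_le_slNorm g
  suffices h : slNorm (g ^ n) ≤ (2 * ρ) ^ n * slNorm g ∧
      slNorm (g ^ (n + 1)) ≤ (2 * ρ) ^ n * slNorm g from h.2
  induction n with
  | zero => simp [slNorm_one, hb]
  | succ n ih =>
    have hpos : 0 ≤ (2 * ρ) ^ n * slNorm g := by positivity
    have htr : |trace (g : Matrix (Fin 2) (Fin 2) ℝ)| * slNorm (g ^ (n + 1)) ≤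
        ρ * ((2 * ρ) ^ n * slNorm g) :=
      mul_le_mul (le_max_right _ _) ih.2 (slNorm_pos _).le (by positivity)
    have hstep := slNorm_pow_add_two_le g n
    rw [pow_succ (2 * ρ)]
    constructor <;> nlinarith

theorem slNorm_pow_le_slNorm_pow_succ {g : SL2}
    (hg : 2 ≤ |trace (g : Matrix (Fin 2) (Fin 2) ℝ)|) (n : ℕ) :
    slNorm (g ^ n) ≤ slNorm (g ^ (n + 1)) := by
  induction n with
  | zero => simpa [slNorm_one] using one_le_slNorm g
  | succ n ih =>
    have := abs_trace_mul_slNorm_pow_succ_le g n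
    have := mul_le_mul_of_nonneg_right hg (slNorm_pos (g ^ (n + 1))).le
    linarith

theorem pow_le_slNorm_pow (g : SL2) (n : ℕ) :
    (max 1 |trace (g : Matrix (Fin 2) (Fin 2) ℝ)| / 2) ^ n ≤ slNorm (g ^ n) := by
  rcases lt_or_ge |trace (g : Matrix (Fin 2) (Fin 2) ℝ)| 2 with hlt | hge
  · refine (pow_le_one₀ (by positivity) ?_).trans (one_le_slNorm _)
    rw [div_le_one two_pos]
    exact max_le one_le_two hlt.le
  · rw [max_eq_right (one_le_two.trans hge)]
    induction n with
    | zero => simp [slNorm_one]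
    | succ n ih =>
      have hstep : |trace (g : Matrix (Fin 2) (Fin 2) ℝ)| / 2 * slNorm (g ^ n) ≤
          slNorm (g ^ (n + 1)) := by
        cases n with
        | zero => simp only [pow_zero, slNorm_one, zero_add, pow_one]; linarith [abs_trace_le g]
        | succ n =>
          have := abs_trace_mul_slNorm_pow_succ_le g n
          have := slNorm_pow_le_slNorm_pow_succ hge n
          have := mul_le_mul_of_nonneg_right hge (slNorm_pos (g ^ (n + 1))).le
          linarith
      rw [pow_succ']
      exact (mul_le_mul_of_nonneg_left ih (by positivity)).trans hstep

-- Both sides are compared with `max 1 |tr g|`, which is the spectral radius up to a factor `2`.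
theorem mul_logNorm_pow_succ_le (g : SL2) (j n : ℕ) :
    j * logNorm (g ^ (n + 1)) ≤
      n * (logNorm (g ^ j) + 2 * j * Real.log 2) + j * logNorm g := by
  set ρ := max 1 |trace (g : Matrix (Fin 2) (Fin 2) ℝ)|
  have hρ : 0 < ρ := one_pos.trans_le (le_max_left _ _)
  have hupper : logNorm (g ^ (n + 1)) ≤ n * (Real.log 2 + Real.log ρ) + logNorm g := by
    have h := Real.log_le_log (slNorm_pos _) (slNorm_pow_succ_le g n)
    rwa [Real.log_mul (by positivity) (slNorm_pos g).ne', Real.log_pow,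
      Real.log_mul two_ne_zero hρ.ne'] at h
  have hlower : j * (Real.log ρ - Real.log 2) ≤ logNorm (g ^ j) := by
    have h := Real.log_le_log (by positivity) (pow_le_slNorm_pow g j)
    rwa [Real.log_pow, Real.log_div hρ.ne' two_ne_zero] at h
  have hj := mul_le_mul_of_nonneg_left hupper j.cast_nonneg (α := ℝ)
  have hn := mul_le_mul_of_nonneg_left hlower n.cast_nonneg (α := ℝ)
  linarith

-- Gordon's argument: if the trace is small, then `g (g u)` is comparable with `u`; otherwise one of
-- `g u`, `g⁻¹ u` is.
theorem norm_le_two_mul_of_slAct_le {g : SL2} {u : ℝ²} {η : ℝ} (hg : ‖slAct g u‖ ≤ η)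
    (hinv : ‖slAct g⁻¹ u‖ ≤ η) (hsq : ‖slAct g (slAct g u)‖ ≤ η) : ‖u‖ ≤ 2 * η := by
  set t := trace (g : Matrix (Fin 2) (Fin 2) ℝ)
  have : 0 ≤ η := (norm_nonneg _).trans hg
  rcases le_total 1 |t| with ht | ht
  · calc ‖u‖ ≤ |t| * ‖u‖ := le_mul_of_one_le_left (norm_nonneg u) ht
      _ = ‖slAct g u + slAct g⁻¹ u‖ := by rw [slAct_add_slAct_inv, norm_smul, Real.norm_eq_abs]
      _ ≤ ‖slAct g u‖ + ‖slAct g⁻¹ u‖ := norm_add_le _ _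
      _ ≤ 2 * η := by linarith
  · have hu : u = t • slAct g u - slAct g (slAct g u) := by
      rw [← slAct_add_slAct_inv g (slAct g u), slAct_inv_slAct, add_sub_cancel_left]
    calc ‖u‖ = ‖t • slAct g u - slAct g (slAct g u)‖ := congrArg norm hu
      _ ≤ |t| * ‖slAct g u‖ + ‖slAct g (slAct g u)‖ := by
        rw [← Real.norm_eq_abs, ← norm_smul]; exact norm_sub_le _ _
      _ ≤ 1 * η + η := by gcongr
      _ = 2 * η := by ring

end CayleyHamilton

/-! ### Contracted directions -/

/-- The signed area spanned by two vectors of the plane. For unit vectors its absolute value is the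
sine of the angle between the lines they span, and serves as a distance between directions. -/
def wedge (u v : ℝ²) : ℝ := u 0 * v 1 - u 1 * v 0

theorem wedge_self (u : ℝ²) : wedge u u = 0 := by rw [wedge, mul_comm, sub_self]

theorem continuous_wedge (u : ℝ²) : Continuous (wedge u) := by unfold wedge; fun_prop

theorem wedge_slAct (g : SL2) (u v : ℝ²) : wedge (slAct g u) (slAct g v) = wedge u v := by
  have hdet : g.1 0 0 * g.1 1 1 - g.1 0 1 * g.1 1 0 = 1 := by
    rw [← Matrix.det_fin_two]; exact g.2
  simp only [wedge, slAct, Matrix.toEuclideanLin, Matrix.toLpLin_apply, Matrix.mulVec,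
    dotProduct, Fin.sum_univ_two]
  linear_combination (u 0 * v 1 - u 1 * v 0) * hdet

theorem norm_sq_eq_add_sq (u : ℝ²) : ‖u‖ ^ 2 = u 0 ^ 2 + u 1 ^ 2 := by
  simp [EuclideanSpace.norm_sq_eq, Fin.sum_univ_two]

theorem abs_wedge_le (u v : ℝ²) : |wedge u v| ≤ ‖u‖ * ‖v‖ := by
  apply abs_le_of_sq_le_sq _ (by positivity)
  rw [mul_pow, norm_sq_eq_add_sq, norm_sq_eq_add_sq, wedge]
  nlinarith [sq_nonneg (u 0 * v 0 + u 1 * v 1)]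

theorem abs_wedge_le_add {u v w : ℝ²} (hu : ‖u‖ = 1) (hv : ‖v‖ = 1) (hw : ‖w‖ = 1) :
    |wedge u w| ≤ |wedge u v| + |wedge v w| := by
  have habs {x y : ℝ²} (hx : ‖x‖ = 1) (hy : ‖y‖ = 1) : |inner ℝ x y| ≤ 1 := by
    simpa [hx, hy] using abs_real_inner_le_norm x y
  have hid : wedge u w = inner ℝ w v * wedge u v + inner ℝ u v * wedge v w := by
    have hv1 : v 0 ^ 2 + v 1 ^ 2 = 1 := by rw [← norm_sq_eq_add_sq, hv, one_pow]
    simp only [wedge, PiLp.inner_apply, Fin.sum_univ_two, RCLike.inner_apply, conj_trivial]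
    linear_combination -(u 0 * w 1 - u 1 * w 0) * hv1
  calc |wedge u w| ≤ |inner ℝ w v| * |wedge u v| + |inner ℝ u v| * |wedge v w| := by
        rw [hid, ← abs_mul, ← abs_mul]; exact abs_add_le _ _
    _ ≤ 1 * |wedge u v| + 1 * |wedge v w| := by gcongr <;> exact habs ‹_› ‹_›
    _ = _ := by rw [one_mul, one_mul]

theorem norm_slAct_le_add_abs_wedge_mul (g : SL2) {u : ℝ²} (hu : ‖u‖ = 1) (w : ℝ²) :
    ‖slAct g w‖ ≤ ‖w‖ * ‖slAct g u‖ + |wedge u w| * slNorm g := by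
  have hu1 : u 0 ^ 2 + u 1 ^ 2 = 1 := by rw [← norm_sq_eq_add_sq, hu, one_pow]
  let u' : ℝ² := !₂[-u 1, u 0]
  have hu' : ‖u'‖ = 1 := by
    rw [← sq_eq_sq₀ (norm_nonneg _) zero_le_one, norm_sq_eq_add_sq, one_pow, ← hu1]
    simp [u', add_comm]
  have hw : w = inner ℝ u w • u + wedge u w • u' := by
    ext i
    fin_cases i <;> simp [u', wedge, PiLp.inner_apply, Fin.sum_univ_two]
    · linear_combination -w 0 * hu1
    · linear_combination -w 1 * hu1
  have hin : |inner ℝ u w| ≤ ‖w‖ := by simpa [hu] using abs_real_inner_le_norm u w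
  have hgu' : ‖slAct g u'‖ ≤ slNorm g := by simpa [hu'] using norm_slAct_le g u'
  calc ‖slAct g w‖ = ‖inner ℝ u w • slAct g u + wedge u w • slAct g u'‖ := by
        conv_lhs => rw [hw, slAct_add, slAct_smul, slAct_smul]
    _ ≤ |inner ℝ u w| * ‖slAct g u‖ + |wedge u w| * ‖slAct g u'‖ := by
        simpa only [norm_smul, Real.norm_eq_abs] using
          norm_add_le (inner ℝ u w • slAct g u) (wedge u w • slAct g u')
    _ ≤ ‖w‖ * ‖slAct g u‖ + |wedge u w| * slNorm g := by gcongr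

theorem exists_unit_slNorm_mul_norm_slAct_le (g : SL2) :
    ∃ v : ℝ², ‖v‖ = 1 ∧ slNorm g * ‖slAct g v‖ ≤ 2 := by
  obtain ⟨x, hx, hgx⟩ : ∃ x : ℝ², ‖x‖ < 1 ∧ slNorm g⁻¹ / 2 < ‖slAct g⁻¹ x‖ :=
    (LinearMap.toContinuousLinearMap (Matrix.toEuclideanLin
      ((g⁻¹ : SL2) : Matrix (Fin 2) (Fin 2) ℝ))).exists_lt_apply_of_lt_opNorm
      (half_lt_self (slNorm_pos g⁻¹))
  rw [slNorm_inv] at hgx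
  have hpos : 0 < ‖slAct g⁻¹ x‖ := (half_pos (slNorm_pos g)).trans hgx
  refine ⟨‖slAct g⁻¹ x‖⁻¹ • slAct g⁻¹ x, by rw [norm_smul, norm_inv, norm_norm,
    inv_mul_cancel₀ hpos.ne'], ?_⟩
  rw [slAct_smul, ← slAct_mul, mul_inv_cancel, slAct_one, norm_smul, norm_inv, norm_norm,
    mul_left_comm, inv_mul_le_iff₀ hpos]
  nlinarith [slNorm_pos g]

theorem slNorm_mul_slNorm_mul_abs_wedge_le {g h : SL2} {v w : ℝ²}
    (hv : slNorm g * ‖slAct g v‖ ≤ 2) (hw : slNorm h * ‖slAct h w‖ ≤ 2) :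
    slNorm g * slNorm h * |wedge v w| ≤ 4 * slNorm (h * g⁻¹) := by
  have hg := (slNorm_pos g).le
  have hh := (slNorm_pos h).le
  have hhg := (slNorm_pos (h * g⁻¹)).le
  have hwedge : |wedge v w| ≤ slNorm (h * g⁻¹) * ‖slAct g v‖ * ‖slAct h w‖ :=
    calc |wedge v w| ≤ ‖slAct h v‖ * ‖slAct h w‖ := by
          rw [← wedge_slAct h]; exact abs_wedge_le _ _
      _ = ‖slAct (h * g⁻¹) (slAct g v)‖ * ‖slAct h w‖ := by
          rw [← slAct_mul, inv_mul_cancel_right]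
      _ ≤ _ := by gcongr; exact norm_slAct_le _ _
  calc slNorm g * slNorm h * |wedge v w|
      ≤ slNorm g * slNorm h * (slNorm (h * g⁻¹) * ‖slAct g v‖ * ‖slAct h w‖) := by gcongr
    _ = slNorm (h * g⁻¹) * ((slNorm g * ‖slAct g v‖) * (slNorm h * ‖slAct h w‖)) := by ring
    _ ≤ slNorm (h * g⁻¹) * (2 * 2) := by gcongr
    _ = 4 * slNorm (h * g⁻¹) := by ring

theorem abs_wedge_le_exp {g h : SL2} {v w : ℝ²} (hv : slNorm g * ‖slAct g v‖ ≤ 2)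
    (hw : slNorm h * ‖slAct h w‖ ≤ 2) :
    |wedge v w| ≤ 4 * Real.exp (logNorm (h * g⁻¹) - (logNorm g + logNorm h)) := by
  have hwedge := slNorm_mul_slNorm_mul_abs_wedge_le hv hw
  rwa [← exp_logNorm, ← exp_logNorm, ← exp_logNorm, ← Real.exp_add,
    ← le_div_iff₀' (Real.exp_pos _), mul_div_assoc, ← Real.exp_sub] at hwedge

theorem norm_slAct_le_exp_add {g : SL2} {v w : ℝ²} (hv : ‖v‖ = 1) (hw : ‖w‖ = 1)
    (hgv : slNorm g * ‖slAct g v‖ ≤ 2) :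
    ‖slAct g w‖ ≤ 2 * Real.exp (-logNorm g) + |wedge v w| * Real.exp (logNorm g) := by
  have hsmall : ‖slAct g v‖ ≤ 2 * Real.exp (-logNorm g) := by
    rwa [Real.exp_neg, exp_logNorm, ← div_eq_mul_inv, le_div_iff₀' (slNorm_pos _)]
  have hle := norm_slAct_le_add_abs_wedge_mul g hv w
  rw [hw, one_mul, ← exp_logNorm] at hle
  linarith

theorem exists_unit_abs_wedge_le {v : ℕ → ℝ²} (hv : ∀ m, ‖v m‖ = 1) {B θ : ℝ} (hθ : θ < 1)
    (hstep : ∀ m, |wedge (v m) (v (m + 1))| ≤ B * θ ^ m) :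
    ∃ w : ℝ², ‖w‖ = 1 ∧ ∀ m, |wedge (v m) w| ≤ B / (1 - θ) * θ ^ m := by
  have hθ' : 0 < 1 - θ := sub_pos.mpr hθ
  have hcauchy (j : ℕ) : ∀ m, |wedge (v m) (v (m + j))| ≤ B / (1 - θ) * θ ^ m := by
    induction j with
    | zero =>
      intro m
      rw [add_zero, wedge_self, abs_zero, div_mul_eq_mul_div]
      exact div_nonneg ((abs_nonneg _).trans (hstep m)) hθ'.le
    | succ j ih =>
      intro m
      rw [add_comm j 1, ← add_assoc]
      calc |wedge (v m) (v (m + 1 + j))|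
          ≤ |wedge (v m) (v (m + 1))| + |wedge (v (m + 1)) (v (m + 1 + j))| :=
            abs_wedge_le_add (hv _) (hv _) (hv _)
        _ ≤ B * θ ^ m + B / (1 - θ) * θ ^ (m + 1) := add_le_add (hstep m) (ih (m + 1))
        _ = B / (1 - θ) * θ ^ m := by field_simp; ring
  obtain ⟨w, hw, φ, hφ, hlim⟩ := (isCompact_sphere (0 : ℝ²) 1).tendsto_subseq
    (x := v) fun m => by rw [mem_sphere_zero_iff_norm, hv m]
  refine ⟨w, mem_sphere_zero_iff_norm.mp hw, fun m => ?_⟩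
  refine le_of_tendsto (((continuous_wedge (v m)).tendsto w).comp hlim).abs ?_
  filter_upwards [eventually_ge_atTop m] with k hk
  obtain ⟨j, hj⟩ := Nat.exists_eq_add_of_le (hk.trans (hφ.id_le k))
  simpa only [Function.comp_apply, hj] using hcauchy j m

theorem exists_unit_norm_slAct_le_exp {P : ℕ → SL2} {κ a b C : ℝ} (ha : 0 < a)
    (hstep : ∀ m, logNorm (P (m + 1) * (P m)⁻¹) ≤ κ)
    (hlower : ∀ m : ℕ, a * m - C ≤ logNorm (P m)) (hupper : ∀ m : ℕ, logNorm (P m) ≤ b * m + C) :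
    ∃ v : ℝ², ‖v‖ = 1 ∧ ∃ D : ℝ, ∀ m : ℕ, ‖slAct (P m) v‖ ≤ D * Real.exp (-(2 * a - b) * m) := by
  choose v hv hPv using fun m => exists_unit_slNorm_mul_norm_slAct_le (P m)
  let B := 4 * Real.exp (κ + 2 * C)
  let θ := Real.exp (-(2 * a))
  have hwedge (m : ℕ) : |wedge (v m) (v (m + 1))| ≤ B * θ ^ m := by
    rw [← Real.exp_nat_mul, mul_assoc, ← Real.exp_add]
    refine (abs_wedge_le_exp (hPv m) (hPv (m + 1))).trans
      (mul_le_mul_of_nonneg_left (Real.exp_le_exp.mpr ?_) zero_le_four)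
    have hm1 := hlower (m + 1)
    push_cast at hm1
    linarith [hstep m, hlower m]
  have hθ : θ < 1 := Real.exp_lt_one_iff.mpr (by linarith)
  obtain ⟨w, hw, hvw⟩ := exists_unit_abs_wedge_le hv hθ hwedge
  refine ⟨w, hw, 2 * Real.exp (3 * C) + B / (1 - θ) * Real.exp C, fun m => ?_⟩
  have hl := hlower m
  have hu := hupper m
  have : 0 ≤ B / (1 - θ) := div_nonneg (by positivity) (sub_pos.mpr hθ).le
  calc ‖slAct (P m) w‖
      ≤ 2 * Real.exp (-logNorm (P m)) + B / (1 - θ) * θ ^ m * Real.exp (logNorm (P m)) := by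
        grw [norm_slAct_le_exp_add (hv m) hw (hPv m), hvw m]
    _ = 2 * Real.exp (-logNorm (P m))
          + B / (1 - θ) * Real.exp (m * -(2 * a) + logNorm (P m)) := by
        rw [Real.exp_add, Real.exp_nat_mul, mul_assoc]
    _ ≤ 2 * Real.exp (3 * C + -(2 * a - b) * m)
          + B / (1 - θ) * Real.exp (C + -(2 * a - b) * m) := by
        gcongr 2 * Real.exp ?_ + B / (1 - θ) * Real.exp ?_ <;> linarith
    _ = _ := by rw [Real.exp_add, Real.exp_add]; ring

/-! ### Products over windows -/

section WindowProd

variable {G : Type*}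

/-- The ordered product `f (i + m - 1) * ⋯ * f (i + 1) * f i`, in the order in which a cocycle
multiplies its values along an orbit. -/
def windowProd [Monoid G] (f : ℤ → G) (i : ℤ) : ℕ → G
  | 0 => 1
  | m + 1 => f (i + m) * windowProd f i m

section Monoid

variable [Monoid G]

@[simp]
theorem windowProd_zero (f : ℤ → G) (i : ℤ) : windowProd f i 0 = 1 := rfl

theorem windowProd_succ (f : ℤ → G) (i : ℤ) (m : ℕ) :
    windowProd f i (m + 1) = f (i + m) * windowProd f i m := rfl

@[simp]
theorem windowProd_one (f : ℤ → G) (i : ℤ) : windowProd f i 1 = f i := by simp [windowProd_succ]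

theorem windowProd_add (f : ℤ → G) (i : ℤ) (m n : ℕ) :
    windowProd f i (m + n) = windowProd f (i + m) n * windowProd f i m := by
  induction n with
  | zero => simp
  | succ n ih =>
    rw [← add_assoc, windowProd_succ, ih, windowProd_succ, mul_assoc, Nat.cast_add, add_assoc]

theorem windowProd_succ' (f : ℤ → G) (i : ℤ) (m : ℕ) :
    windowProd f i (m + 1) = windowProd f (i + 1) m * f i := by
  rw [add_comm, windowProd_add, windowProd_one, Nat.cast_one]

theorem windowProd_congr {f g : ℤ → G} {i j : ℤ} {m : ℕ}
    (h : ∀ t < m, f (i + t) = g (j + t)) : windowProd f i m = windowProd g j m := by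
  induction m with
  | zero => rfl
  | succ m ih =>
    rw [windowProd_succ, windowProd_succ, h m m.lt_succ_self,
      ih fun t ht => h t (ht.trans m.lt_succ_self)]

theorem windowProd_windowProd (f : ℤ → G) (o : ℤ) (L : ℕ) (j : ℤ) (t : ℕ) :
    windowProd (fun s => windowProd f (s * L + o) L) j t = windowProd f (j * L + o) (t * L) := by
  induction t with
  | zero => simp
  | succ t ih =>
    rw [windowProd_succ, ih, add_mul t, one_mul, windowProd_add]
    congr 2
    push_cast
    ring

end Monoid

theorem windowProd_inv_comp_neg [Group G] (f : ℤ → G) (i : ℤ) (m : ℕ) :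
    windowProd (fun s => (f (-s))⁻¹) i m = (windowProd f (1 - i - m) m)⁻¹ := by
  induction m with
  | zero => simp
  | succ m ih =>
    rw [windowProd_succ, ih, windowProd_succ', mul_inv_rev]
    congr 3 <;> push_cast <;> ring_nf

end WindowProd

section LogNormWindowProd

variable {F : ℤ → SL2} {κ : ℝ}

theorem logNorm_windowProd_le (hF : ∀ i, logNorm (F i) ≤ κ) (i : ℤ) (m : ℕ) :
    logNorm (windowProd F i m) ≤ m * κ := by
  induction m with
  | zero => simp [logNorm_one]
  | succ m ih =>
    rw [windowProd_succ]
    push_cast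
    linarith [logNorm_mul_le (F (i + m)) (windowProd F i m), hF (i + m)]

theorem abs_logNorm_mul_mul_sub_le (x g y : SL2) :
    |logNorm (x * g * y) - logNorm g| ≤ logNorm x + logNorm y := by
  rw [abs_sub_le_iff]
  constructor
  · linarith [logNorm_mul_le (x * g) y, logNorm_mul_le x g]
  · linarith [logNorm_left_le (x * g) y, logNorm_right_le x g]

theorem exists_aligned_window (hF : ∀ i, logNorm (F i) ≤ κ) {L : ℕ} (hL : 0 < L) (o i : ℤ)
    (m : ℕ) :
    ∃ (j : ℤ) (t : ℕ), |(m : ℝ) - t * L| ≤ 2 * L ∧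
      |logNorm (windowProd F i m) - logNorm (windowProd F (j * L + o) (t * L))| ≤ 2 * L * κ := by
  have hκ : 0 ≤ κ := (logNorm_nonneg _).trans (hF 0)
  obtain ⟨d, hd⟩ := Int.eq_ofNat_of_zero_le (Int.emod_nonneg (o - i) (by positivity : (L : ℤ) ≠ 0))
  have hdL : d < L := by
    have := Int.emod_lt_of_pos (o - i) (by positivity : (0 : ℤ) < L)
    omega
  have hid : i + d = -((o - i) / L) * L + o := by
    have := Int.emod_add_mul_ediv (o - i) L
    rw [hd] at this
    linarith
  obtain ⟨t, r, s, hm, hrs, hprod⟩ : ∃ t r s : ℕ, m = r + (t * L + s) ∧ r + s ≤ 2 * L ∧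
      ∃ j : ℤ, windowProd F i m = windowProd F (j * L + o + (t * L : ℕ)) s *
        windowProd F (j * L + o) (t * L) * windowProd F i r := by
    rcases lt_or_ge m d with hmd | hdm
    · exact ⟨0, m, 0, by simp, by omega, 0, by simp⟩
    · refine ⟨(m - d) / L, d, (m - d) % L, ?_, ?_, -((o - i) / L), ?_⟩
      · rw [Nat.div_add_mod']; omega
      · have := Nat.mod_lt (m - d) hL; omega
      · conv_lhs => rw [← Nat.add_sub_of_le hdm, ← Nat.div_add_mod' (m - d) L]
        rw [windowProd_add, windowProd_add, hid]
  obtain ⟨j, hprod⟩ := hprod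
  have hmR : (m : ℝ) = r + (t * L + s) := by exact_mod_cast hm
  have hrsR : (r : ℝ) + s ≤ 2 * L := by exact_mod_cast hrs
  refine ⟨j, t, ?_, ?_⟩
  · rw [abs_of_nonneg] <;> linarith [r.cast_nonneg (α := ℝ), s.cast_nonneg (α := ℝ)]
  · rw [hprod]
    refine (abs_logNorm_mul_mul_sub_le _ _ _).trans ?_
    have := mul_le_mul_of_nonneg_right hrsR hκ
    linarith [logNorm_windowProd_le hF (j * L + o + (t * L : ℕ)) s, logNorm_windowProd_le hF i r]

end LogNormWindowProd

/-! ### Toeplitz sequences -/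

/-- The number `n 0 * ⋯ * n (k - 1)`, one more than the length of the Toeplitz block `Blk a n k`:
the copies of that block in a Toeplitz sequence are separated by single letters at the multiples of
`blockPeriod n k`. -/
def blockPeriod (n : ℕ → ℕ) (k : ℕ) : ℕ := ∏ j ∈ Finset.range k, n j

/-- A two-sided Toeplitz sequence with coding sequences `a` and `n`: the letter `a k` stands at the
positions divisible by `blockPeriod n k` but not by `blockPeriod n (k + 1)`. The letter at `0`,
which is divisible by all of these periods, is arbitrary. -/
def IsToeplitzSeq {α : Type*} (a : ℕ → α) (n : ℕ → ℕ) (q : ℤ → α) : Prop :=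
  ∀ (k : ℕ) (i : ℤ), (blockPeriod n k : ℤ) ∣ i → ¬ (blockPeriod n (k + 1) : ℤ) ∣ i → q i = a k

section BlockPeriod

variable {n : ℕ → ℕ}

theorem blockPeriod_zero (n : ℕ → ℕ) : blockPeriod n 0 = 1 := Finset.prod_range_zero n

theorem blockPeriod_succ (n : ℕ → ℕ) (k : ℕ) : blockPeriod n (k + 1) = blockPeriod n k * n k :=
  Finset.prod_range_succ n k

theorem blockPeriod_add (n : ℕ → ℕ) (k l : ℕ) :
    blockPeriod n (k + l) = blockPeriod n k * blockPeriod (fun j => n (k + j)) l :=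
  Finset.prod_range_add n k l

theorem blockPeriod_dvd {k l : ℕ} (h : k ≤ l) : blockPeriod n k ∣ blockPeriod n l :=
  Finset.prod_dvd_prod_of_subset _ _ n (Finset.range_mono h)

theorem exists_blockPeriod_dvd_and_not_dvd {K : ℕ} {i : ℤ} (hK : ¬ (blockPeriod n K : ℤ) ∣ i) :
    ∃ k < K, (blockPeriod n k : ℤ) ∣ i ∧ ¬ (blockPeriod n (k + 1) : ℤ) ∣ i := by
  induction K with
  | zero => simp [blockPeriod_zero] at hK
  | succ K ih =>
    by_cases h : (blockPeriod n K : ℤ) ∣ i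
    · exact ⟨K, K.lt_succ_self, h, hK⟩
    · obtain ⟨k, hk, hki⟩ := ih h
      exact ⟨k, hk.trans K.lt_succ_self, hki⟩

variable (hn : ∀ k, 2 ≤ n k)

include hn

theorem lt_blockPeriod (k : ℕ) : k < blockPeriod n k :=
  calc k < 2 ^ k := k.lt_two_pow_self
    _ = 2 ^ (Finset.range k).card := by rw [Finset.card_range]
    _ ≤ blockPeriod n k := Finset.pow_card_le_prod _ _ _ fun j _ => hn j

theorem blockPeriod_pos (k : ℕ) : 0 < blockPeriod n k := k.zero_le.trans_lt (lt_blockPeriod hn k)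

theorem exists_blockPeriod_le_and_lt {K m : ℕ} (hK : blockPeriod n K ≤ m) :
    ∃ k ≥ K, blockPeriod n k ≤ m ∧ m < blockPeriod n (k + 1) := by
  by_contra! hstep
  have hall : ∀ k ≥ K, blockPeriod n k ≤ m := Nat.le_induction hK hstep
  have := hall (max K m) (le_max_left K m)
  have := lt_blockPeriod hn (max K m)
  omega

theorem exists_blockPeriod_dvd_and_forall_not_dvd {i : ℤ} {m : ℕ} (hm : 0 < m)
    (h0 : ¬ (i ≤ 0 ∧ 0 < i + m)) :
    ∃ (K : ℕ) (c : ℤ), i ≤ c ∧ c < i + m ∧ (blockPeriod n K : ℤ) ∣ c ∧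
      ∀ c' : ℤ, i ≤ c' → c' < i + m → ¬ (blockPeriod n (K + 1) : ℤ) ∣ c' := by
  by_contra! hstep
  have hall (K : ℕ) : ∃ c : ℤ, i ≤ c ∧ c < i + m ∧ (blockPeriod n K : ℤ) ∣ c := by
    induction K with
    | zero => exact ⟨i, le_rfl, by omega, by simp [blockPeriod_zero]⟩
    | succ K ih =>
      obtain ⟨c, hic, hcm, hc⟩ := ih
      exact hstep K c hic hcm hc
  obtain ⟨c, hic, hcm, hc⟩ := hall (i.natAbs + m)
  have hlt := lt_blockPeriod hn (i.natAbs + m)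
  have hc0 : c = 0 := Int.eq_zero_of_abs_lt_dvd hc (abs_lt.mpr (by omega))
  omega

theorem tendsto_blockPeriod : Tendsto (blockPeriod n) atTop atTop :=
  tendsto_atTop_mono (fun k => (lt_blockPeriod hn k).le) tendsto_id

end BlockPeriod

namespace IsToeplitzSeq

variable {α β : Type*} {a : ℕ → α} {n : ℕ → ℕ} {q : ℤ → α}

theorem comp (hq : IsToeplitzSeq a n q) (φ : α → β) : IsToeplitzSeq (φ ∘ a) n (φ ∘ q) :=
  fun k i h1 h2 => congrArg φ (hq k i h1 h2)

theorem comp_neg (hq : IsToeplitzSeq a n q) : IsToeplitzSeq a n fun i => q (-i) :=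
  fun k i h1 h2 => hq k (-i) (by rwa [dvd_neg]) (by rwa [dvd_neg])

theorem update_zero (hq : IsToeplitzSeq a n q) (x : α) :
    IsToeplitzSeq a n (Function.update q 0 x) := by
  intro k i h1 h2
  have hi : i ≠ 0 := fun h => h2 (h ▸ dvd_zero _)
  rw [Function.update_of_ne hi, hq k i h1 h2]

theorem apply_mem_range (hq : IsToeplitzSeq a n q) (hn : ∀ k, 2 ≤ n k) {i : ℤ} (hi : i ≠ 0) :
    q i ∈ Set.range a := by
  have hlt := lt_blockPeriod hn i.natAbs
  have hK : ¬ (blockPeriod n i.natAbs : ℤ) ∣ i := fun h =>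
    hi (Int.eq_zero_of_abs_lt_dvd h (abs_lt.mpr (by omega)))
  obtain ⟨k, -, h1, h2⟩ := exists_blockPeriod_dvd_and_not_dvd hK
  exact ⟨k, (hq k i h1 h2).symm⟩

theorem apply_add (hq : IsToeplitzSeq a n q) {K : ℕ} {i t : ℤ} (ht : (blockPeriod n K : ℤ) ∣ t)
    (hi : ¬ (blockPeriod n K : ℤ) ∣ i) : q (t + i) = q i := by
  obtain ⟨k, hkK, h1, h2⟩ := exists_blockPeriod_dvd_and_not_dvd hi
  have hdvd {l : ℕ} (hl : l ≤ K) : (blockPeriod n l : ℤ) ∣ t + i ↔ (blockPeriod n l : ℤ) ∣ i :=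
    dvd_add_right ((Int.natCast_dvd_natCast.mpr (blockPeriod_dvd hl)).trans ht)
  rw [hq k i h1 h2, hq k (t + i) ((hdvd hkK.le).mpr h1) (mt (hdvd hkK).mp h2)]

theorem apply_mul_blockPeriod (hq : IsToeplitzSeq a n q) (hn : ∀ k, 2 ≤ n k) {k j : ℕ}
    (hj0 : 0 < j) (hj : j < n k) : q (j * blockPeriod n k : ℕ) = a k := by
  refine hq k _ (Int.natCast_dvd_natCast.mpr (dvd_mul_left _ _)) ?_
  rw [Int.natCast_dvd_natCast, blockPeriod_succ, mul_comm j,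
    Nat.mul_dvd_mul_iff_left (blockPeriod_pos hn k)]
  exact Nat.not_dvd_of_pos_of_lt hj0 hj

theorem comp_mul (hq : IsToeplitzSeq a n q) (hn : ∀ k, 2 ≤ n k) (k₀ : ℕ) :
    IsToeplitzSeq (fun k => a (k₀ + k)) (fun k => n (k₀ + k))
      fun j => q (j * blockPeriod n k₀) := by
  have hdvd (k : ℕ) (j : ℤ) : (blockPeriod n (k₀ + k) : ℤ) ∣ j * blockPeriod n k₀ ↔
      (blockPeriod (fun k => n (k₀ + k)) k : ℤ) ∣ j := by
    rw [blockPeriod_add, mul_comm j, Nat.cast_mul]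
    exact mul_dvd_mul_iff_left (Int.natCast_ne_zero.mpr (blockPeriod_pos hn k₀).ne')
  exact fun k j h1 h2 => hq (k₀ + k) _ ((hdvd k j).mpr h1) (mt (hdvd (k + 1) j).mp h2)

-- The center is a position in the window that is divisible by the largest possible period.
theorem exists_center (hq : IsToeplitzSeq a n q) (hn : ∀ k, 2 ≤ n k) (i : ℤ) {m : ℕ}
    (hm : 0 < m) : ∃ c : ℤ, i ≤ c ∧ c < i + m ∧
      ∀ s : ℤ, s ≠ 0 → i ≤ c + s → c + s < i + m → q (c + s) = q s := by
  by_cases h0 : i ≤ 0 ∧ 0 < i + m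
  · exact ⟨0, h0.1, h0.2, fun s _ _ _ => by rw [zero_add]⟩
  obtain ⟨K, c, hic, hcm, hKc, hnone⟩ := exists_blockPeriod_dvd_and_forall_not_dvd hn hm h0
  have hmL : (m : ℤ) < blockPeriod n (K + 1) := by
    by_contra! hle
    have hpos : (0 : ℤ) < blockPeriod n (K + 1) := by exact_mod_cast blockPeriod_pos hn (K + 1)
    have hnonneg := Int.emod_nonneg (-i) hpos.ne'
    have hlt := Int.emod_lt_of_pos (-i) hpos
    refine hnone (i + -i % blockPeriod n (K + 1)) (by omega) (by omega) ?_
    exact (Int.dvd_iff_emod_eq_zero).mpr (by simp)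
  refine ⟨c, hic, hcm, fun s hs his hsm => ?_⟩
  by_cases hKs : (blockPeriod n K : ℤ) ∣ s
  · have hs' : ¬ (blockPeriod n (K + 1) : ℤ) ∣ s := fun h =>
      hs (Int.eq_zero_of_abs_lt_dvd h (abs_lt.mpr (by omega)))
    rw [hq K s hKs hs', hq K (c + s) (dvd_add hKc hKs) (hnone _ his hsm)]
  · exact hq.apply_add hKc hKs

end IsToeplitzSeq

/-! ### The exponent of the block products -/

/-- The ordered product of `f` over the first block `{1, …, blockPeriod n k - 1}` of order `k`. -/
def blockProd {G : Type*} [Monoid G] (f : ℤ → G) (n : ℕ → ℕ) (k : ℕ) : G :=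
  windowProd f 1 (blockPeriod n k - 1)

namespace IsToeplitzSeq

variable {G : Type*} [Monoid G] {X : ℕ → G} {n : ℕ → ℕ} {f : ℤ → G}

theorem windowProd_add_one (hf : IsToeplitzSeq X n f) {k r : ℕ} (hr : r < blockPeriod n k) {t : ℤ}
    (ht : (blockPeriod n k : ℤ) ∣ t) : windowProd f (t + 1) r = windowProd f 1 r := by
  refine windowProd_congr fun s hs => ?_
  rw [add_assoc]
  refine hf.apply_add ht fun hdvd => ?_
  have := Int.le_of_dvd (by omega) hdvd
  omega

variable (hf : IsToeplitzSeq X n f) (hn : ∀ k, 2 ≤ n k)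

include hf hn

theorem windowProd_neg_eq_blockProd (k : ℕ) :
    windowProd f (-(blockPeriod n k - 1 : ℕ)) (blockPeriod n k - 1) = blockProd f n k := by
  have hL := blockPeriod_pos hn k
  have hstart : (-(blockPeriod n k - 1 : ℕ) : ℤ) = -blockPeriod n k + 1 := by omega
  rw [hstart, hf.windowProd_add_one (by omega) (dvd_neg.mpr dvd_rfl), blockProd]

theorem windowProd_period (k : ℕ) {t : ℤ} (ht : (blockPeriod n k : ℤ) ∣ t) :
    windowProd f (t + 1) (blockPeriod n k) = f (t + blockPeriod n k) * blockProd f n k := by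
  obtain ⟨l, hl⟩ : ∃ l, blockPeriod n k = l + 1 :=
    Nat.exists_eq_add_one_of_ne_zero (blockPeriod_pos hn k).ne'
  conv_lhs => rw [hl, windowProd_succ, hf.windowProd_add_one (k := k) (by omega) ht]
  rw [blockProd, hl, Nat.add_sub_cancel, add_assoc, Nat.cast_succ, add_comm (1 : ℤ)]

theorem windowProd_mul_add {k j r : ℕ} (hj : j < n k) (hr : r < blockPeriod n k) :
    windowProd f 1 (j * blockPeriod n k + r) = windowProd f 1 r * (X k * blockProd f n k) ^ j := by
  have hdvd (i : ℕ) : (blockPeriod n k : ℤ) ∣ (i * blockPeriod n k : ℕ) :=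
    Int.natCast_dvd_natCast.mpr (dvd_mul_left _ _)
  have hfull : windowProd f 1 (j * blockPeriod n k) = (X k * blockProd f n k) ^ j := by
    induction j with
    | zero => simp
    | succ j ih =>
      have hX := hf.apply_mul_blockPeriod hn (j := j + 1) j.succ_pos hj
      rw [add_mul, one_mul, Nat.cast_add] at hX
      rw [add_mul, one_mul, windowProd_add, ih (by omega), add_comm (1 : ℤ),
        hf.windowProd_period hn k (hdvd j), hX, pow_succ']
  rw [windowProd_add, hfull, add_comm (1 : ℤ), hf.windowProd_add_one hr (hdvd j)]

theorem mul_blockProd_succ (k : ℕ) :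
    X k * blockProd f n (k + 1) = (X k * blockProd f n k) ^ n k := by
  obtain ⟨m, hm⟩ : ∃ m, n k = m + 1 :=
    Nat.exists_eq_add_one_of_ne_zero (two_pos.trans_le (hn k)).ne'
  have hL := blockPeriod_pos hn k
  have hlen : blockPeriod n (k + 1) - 1 = m * blockPeriod n k + (blockPeriod n k - 1) := by
    rw [blockPeriod_succ, hm, mul_comm, add_mul, one_mul]
    omega
  rw [blockProd, hlen, hf.windowProd_mul_add hn (by omega) (by omega), ← blockProd, ← mul_assoc,
    hm, pow_succ']

theorem windowProd_eq_blockProd_mul_mul_blockProd (k : ℕ) :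
    windowProd f 1 (blockPeriod n k + (blockPeriod n k - 1)) =
      blockProd f n k * X k * blockProd f n k := by
  have hL := blockPeriod_pos hn k
  have h := hf.windowProd_mul_add hn (k := k) (r := blockPeriod n k - 1)
    (one_lt_two.trans_le (hn k)) (by omega)
  rwa [one_mul, pow_one, ← mul_assoc, ← blockProd] at h

theorem windowProd_one_blockPeriod (k : ℕ) :
    windowProd f 1 (blockPeriod n k) = X k * blockProd f n k := by
  have hX := hf.apply_mul_blockPeriod hn one_pos (one_lt_two.trans_le (hn k))
  rw [one_mul] at hX
  simpa [hX] using hf.windowProd_period hn k (dvd_zero _)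

theorem windowProd_mul_windowProd_mul_add {k j r : ℕ} (hj : j < n k) (hr : r < blockPeriod n k) :
    windowProd f (1 + r) (blockPeriod n k - r) * windowProd f 1 (j * blockPeriod n k + r) =
      (X k * blockProd f n k) ^ (j + 1) := by
  rw [hf.windowProd_mul_add hn hj hr, ← mul_assoc, ← windowProd_add, Nat.add_sub_of_le hr.le,
    hf.windowProd_one_blockPeriod hn, pow_succ']

end IsToeplitzSeq

theorem IsToeplitzSeq.inv_comp_neg {G : Type*} [Group G] {X : ℕ → G} {n : ℕ → ℕ} {f : ℤ → G}
    (hf : IsToeplitzSeq X n f) : IsToeplitzSeq (fun k => (X k)⁻¹) n fun i => (f (-i))⁻¹ :=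
  hf.comp_neg.comp Inv.inv

theorem IsToeplitzSeq.blockProd_inv_comp_neg {G : Type*} [Group G] {X : ℕ → G} {n : ℕ → ℕ}
    {f : ℤ → G} (hf : IsToeplitzSeq X n f) (hn : ∀ k, 2 ≤ n k) (k : ℕ) :
    blockProd (fun i => (f (-i))⁻¹) n k = (blockProd f n k)⁻¹ := by
  rw [blockProd, windowProd_inv_comp_neg, sub_self, zero_sub, hf.windowProd_neg_eq_blockProd hn]

theorem IsToeplitzSeq.sub_le_logNorm_windowProd_one {X : ℕ → SL2} {n : ℕ → ℕ} {f : ℤ → SL2}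
    (hf : IsToeplitzSeq X n f) (hn : ∀ k, 2 ≤ n k) {b c C : ℝ} (hcb : c ≤ b)
    (hupper : ∀ (i : ℤ) (m : ℕ), logNorm (windowProd f i m) ≤ b * m + C) {k m : ℕ}
    (hpow : ∀ j : ℕ, c * (j * blockPeriod n k) ≤ logNorm ((X k * blockProd f n k) ^ j))
    (hkm : blockPeriod n k ≤ m) (hmk : m < blockPeriod n (k + 1)) :
    (c - (b - c)) * m - C ≤ logNorm (windowProd f 1 m) := by
  set L := blockPeriod n k
  have hj : m / L < n k := Nat.div_lt_of_lt_mul (by rwa [blockPeriod_succ] at hmk)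
  have hr : m % L < L := Nat.mod_lt m (blockPeriod_pos hn k)
  have hdiv := Nat.div_add_mod' m L
  set j := m / L
  set r := m % L
  have hnext := hpow (j + 1)
  rw [← hf.windowProd_mul_windowProd_mul_add hn hj hr, hdiv] at hnext
  have hsplit := logNorm_mul_le (windowProd f (1 + r) (L - r)) (windowProd f 1 m)
  have hrest := hupper (1 + r) (L - r)
  have hmR : (m : ℝ) = j * L + r := by exact_mod_cast hdiv.symm
  have hlen : (b - c) * (L - r : ℝ) ≤ (b - c) * m := by
    gcongr
    linarith [(Nat.cast_le (α := ℝ)).mpr hkm, r.cast_nonneg (α := ℝ)]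
  rw [Nat.cast_sub hr.le] at hrest
  have hperiods : c * ((j + 1 : ℕ) * L) = c * m + c * (L - r) := by rw [hmR]; push_cast; ring
  rw [hperiods] at hnext
  linarith

/-- `Λ` is the infimum of the growth rates of the block products of `f`. The summand `κ`, an upper
bound of `logNorm ∘ f`, accounts for the letter following a block, so that the infimum is a
limit. -/
def IsBlockExponent (f : ℤ → SL2) (n : ℕ → ℕ) (κ Λ : ℝ) : Prop :=
  IsGLB (Set.range fun k => (κ + logNorm (blockProd f n k)) / blockPeriod n k) Λ

section BlockExponent

variable {X : ℕ → SL2} {n : ℕ → ℕ} {f : ℤ → SL2} {κ Λ : ℝ}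

theorem exists_isBlockExponent (f : ℤ → SL2) (n : ℕ → ℕ) (hκ : 0 ≤ κ) :
    ∃ Λ, IsBlockExponent f n κ Λ := by
  refine Real.exists_isGLB (Set.range_nonempty _) ⟨0, ?_⟩
  rintro _ ⟨k, rfl⟩
  exact div_nonneg (add_nonneg hκ (logNorm_nonneg _)) (Nat.cast_nonneg _)

namespace IsBlockExponent

variable (hΛ : IsBlockExponent f n κ Λ) (hn : ∀ k, 2 ≤ n k)

include hΛ hn

theorem mul_le (k : ℕ) : Λ * blockPeriod n k ≤ κ + logNorm (blockProd f n k) := by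
  rw [← le_div_iff₀ (Nat.cast_pos.mpr (blockPeriod_pos hn k))]
  exact hΛ.1 ⟨k, rfl⟩

theorem exists_le_mul {c : ℝ} (hc : Λ < c) :
    ∃ k, κ + logNorm (blockProd f n k) ≤ c * blockPeriod n k := by
  obtain ⟨_, ⟨k, rfl⟩, -, hk⟩ := hΛ.exists_between hc
  exact ⟨k, ((div_lt_iff₀ (Nat.cast_pos.mpr (blockPeriod_pos hn k))).mp hk).le⟩

variable (hf : IsToeplitzSeq X n f)

include hf

theorem inv_comp_neg : IsBlockExponent (fun i => (f (-i))⁻¹) n κ Λ := by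
  simpa only [IsBlockExponent, hf.blockProd_inv_comp_neg hn, logNorm_inv] using hΛ

variable (hκ : ∀ i, logNorm (f i) ≤ κ) {c : ℝ}

include hκ

theorem exists_logNorm_windowProd_le (hc : Λ < c) :
    ∃ C, ∀ (i : ℤ) (m : ℕ), logNorm (windowProd f i m) ≤ c * m + C := by
  obtain ⟨k, hk⟩ := hΛ.exists_le_mul hn hc
  set L := blockPeriod n k
  have hperiods (j : ℤ) (t : ℕ) : logNorm (windowProd f (j * L + 1) (t * L)) ≤ t * (c * L) := by
    rw [← windowProd_windowProd f 1 L j t]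
    refine logNorm_windowProd_le (fun s => ?_) j t
    rw [hf.windowProd_period hn k (dvd_mul_left _ _)]
    exact (logNorm_mul_le _ _).trans ((add_le_add_left (hκ _) _).trans hk)
  refine ⟨|c| * (2 * L) + 2 * L * κ, fun i m => ?_⟩
  obtain ⟨j, t, hm, hlog⟩ := exists_aligned_window hκ (blockPeriod_pos hn k) 1 i m
  have hcm : |c * (m - t * L)| ≤ |c| * (2 * L) := by rw [abs_mul]; gcongr
  linarith [(abs_le.mp hcm).1, (abs_le.mp hlog).2, hperiods j t]

theorem le_logNorm_pow (k : ℕ) :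
    Λ * blockPeriod n (k + 1) - 2 * κ ≤ logNorm ((X k * blockProd f n k) ^ n k) := by
  have hX : logNorm (X k) ≤ κ := by
    rw [← hf.apply_mul_blockPeriod hn one_pos (one_lt_two.trans_le (hn k))]
    exact hκ _
  rw [← hf.mul_blockProd_succ hn]
  linarith [hΛ.mul_le hn (k + 1), logNorm_right_le (X k) (blockProd f n (k + 1))]

-- The norm of `(X k * blockProd f n k) ^ n k`, which is nearly `blockProd f n (k + 1)`, is bounded
-- below by the exponent; by `mul_logNorm_pow_succ_le` this forces all powers to be large.
theorem eventually_le_logNorm_pow (hc : c < Λ) : ∀ᶠ k in atTop, ∀ j : ℕ,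
    c * (j * blockPeriod n k) ≤ logNorm ((X k * blockProd f n k) ^ j) := by
  have hκ0 : 0 ≤ κ := (logNorm_nonneg _).trans (hκ 0)
  set δ := (Λ - c) / 2 with hδ
  have hδ0 : 0 < δ := half_pos (sub_pos.mpr hc)
  obtain ⟨C, hC⟩ := hΛ.exists_logNorm_windowProd_le hn hf hκ (lt_add_of_pos_right Λ hδ0)
  have hlarge : ∀ᶠ k in atTop, 2 * κ + |C| + 2 * Real.log 2 ≤ δ * blockPeriod n k :=
    ((tendsto_natCast_atTop_atTop.comp (tendsto_blockPeriod hn)).const_mul_atTop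
      hδ0).eventually_ge_atTop _
  filter_upwards [hlarge] with k hk j
  set L : ℝ := (blockPeriod n k : ℝ) with hL
  obtain ⟨m, hm⟩ : ∃ m, n k = m + 1 :=
    Nat.exists_eq_add_one_of_ne_zero (two_pos.trans_le (hn k)).ne'
  have hm1 : (1 : ℝ) ≤ m := by have := hn k; exact_mod_cast (by omega : 1 ≤ m)
  have hlower := hΛ.le_logNorm_pow hn hf hκ k
  rw [blockPeriod_succ, hm, Nat.cast_mul, ← hL, Nat.cast_succ] at hlower
  have hupper : logNorm (X k * blockProd f n k) ≤ (Λ + δ) * L + C := by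
    rw [← hf.windowProd_one_blockPeriod hn]; exact hC 1 _
  have hbracket : m * (c * L) ≤
      Λ * (L * (m + 1)) - 2 * κ - ((Λ + δ) * L + C) - 2 * m * Real.log 2 := by
    have hmk := mul_le_mul_of_nonneg_left hk m.cast_nonneg (α := ℝ)
    have hmκ := le_mul_of_one_le_left (by positivity : 0 ≤ 2 * κ + |C|) hm1
    have hmδ := le_mul_of_one_le_left (by positivity : 0 ≤ δ * L) hm1
    have hcΛ : c = Λ - 2 * δ := by rw [hδ]; ring
    rw [hcΛ]
    linarith [le_abs_self C]
  have hgrowth := mul_logNorm_pow_succ_le (X k * blockProd f n k) j m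
  refine le_of_mul_le_mul_left ?_ (one_pos.trans_le hm1)
  have hj := j.cast_nonneg (α := ℝ)
  linarith [mul_le_mul_of_nonneg_left hbracket hj, mul_le_mul_of_nonneg_left hlower hj,
    mul_le_mul_of_nonneg_left hupper hj]

theorem exists_le_logNorm_windowProd_one (hc : c < Λ) :
    ∃ C, ∀ m : ℕ, c * m - C ≤ logNorm (windowProd f 1 m) := by
  set δ := (Λ - c) / 3 with hδ
  have hδ0 : 0 < δ := div_pos (sub_pos.mpr hc) three_pos
  obtain ⟨C, hC⟩ := hΛ.exists_logNorm_windowProd_le hn hf hκ (lt_add_of_pos_right Λ hδ0)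
  obtain ⟨K, hK⟩ := eventually_atTop.mp
    (hΛ.eventually_le_logNorm_pow hn hf hκ (sub_lt_self Λ hδ0))
  refine ⟨|C| + |c| * blockPeriod n K, fun m => ?_⟩
  rcases lt_or_ge m (blockPeriod n K) with hm | hm
  · have hcm : c * m ≤ |c| * blockPeriod n K := by gcongr; exact le_abs_self c
    linarith [logNorm_nonneg (windowProd f 1 m), abs_nonneg C]
  · obtain ⟨k, hKk, hkm, hmk⟩ := exists_blockPeriod_le_and_lt hn hm
    have hlower := hf.sub_le_logNorm_windowProd_one hn (by linarith) hC (hK k hKk) hkm hmk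
    have hrate : Λ - δ - (Λ + δ - (Λ - δ)) = c := by rw [hδ]; ring
    rw [hrate] at hlower
    have hcK : 0 ≤ |c| * blockPeriod n K := by positivity
    linarith [le_abs_self C]

end IsBlockExponent

end BlockExponent

/-! ### Uniform growth -/

theorem abs_wedge_slAct_le (g h x : SL2) (u v : ℝ²) :
    |wedge v (slAct x u)| ≤ ‖slAct g v‖ * (slNorm (g * x * h) * ‖slAct h⁻¹ u‖) :=
  calc |wedge v (slAct x u)| ≤ ‖slAct g v‖ * ‖slAct g (slAct x u)‖ := by
        rw [← wedge_slAct g]; exact abs_wedge_le _ _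
    _ = ‖slAct g v‖ * ‖slAct (g * x * h) (slAct h⁻¹ u)‖ := by
        rw [← slAct_mul, ← slAct_mul, mul_inv_cancel_right]
    _ ≤ _ := by gcongr; exact norm_slAct_le _ _

theorem IsToeplitzSeq.exists_windowProd_eq {G : Type*} [Monoid G] {X : ℕ → G} {n : ℕ → ℕ}
    {f : ℤ → G} (hf : IsToeplitzSeq X n f) (hn : ∀ k, 2 ≤ n k) (h0 : f 0 ∈ Set.range X) (i : ℤ)
    {m : ℕ} (hm : 0 < m) :
    ∃ x ∈ Set.range X, ∃ l r : ℕ, m = l + 1 + r ∧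
      windowProd f i m = windowProd f 1 r * x * windowProd f (-l) l := by
  obtain ⟨c, hic, hcm, hc⟩ := hf.exists_center hn i hm
  have hx : f c ∈ Set.range X := by
    rcases eq_or_ne c 0 with rfl | hc0
    exacts [h0, hf.apply_mem_range hn hc0]
  obtain ⟨l, hl⟩ := Int.eq_ofNat_of_zero_le (sub_nonneg.mpr hic)
  obtain ⟨r, hr⟩ := Int.eq_ofNat_of_zero_le (Int.sub_nonneg_of_le (Int.add_one_le_of_lt hcm))
  refine ⟨f c, hx, l, r, by omega, ?_⟩
  have hleft : windowProd f i l = windowProd f (-l) l := windowProd_congr fun t ht => by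
    rw [← hc (-l + t) (by omega) (by omega) (by omega)]
    congr 1
    omega
  have hright : windowProd f (c + 1) r = windowProd f 1 r := windowProd_congr fun t ht => by
    rw [← hc (1 + t) (by omega) (by omega) (by omega), add_assoc]
  have hil : i + l = c := by omega
  obtain rfl : m = l + 1 + r := by omega
  rw [windowProd_add, windowProd_succ, hil, hleft, Nat.cast_succ, ← add_assoc, hil, hright,
    mul_assoc]

section Transversality

variable {X : ℕ → SL2} {n : ℕ → ℕ} {f : ℤ → SL2}

-- If `slAct x u` were parallel to `v`, then for `g = blockProd f n k * x` with `X k = x` all three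
-- vectors in `norm_le_two_mul_of_slAct_le` would be small: `g u` and `g (g u)` by contraction to
-- the right, `g⁻¹ u` by contraction to the left.
theorem IsToeplitzSeq.wedge_slAct_ne_zero (hf : IsToeplitzSeq X n f) (hn : ∀ k, 2 ≤ n k) {x : SL2}
    (hx : ∃ᶠ k in atTop, X k = x) {u v : ℝ²} (hu : u ≠ 0) (hv : ‖v‖ = 1)
    (hright : Tendsto (fun m : ℕ => ‖slAct (windowProd f 1 m) v‖) atTop (𝓝 0))
    (hleft : Tendsto (fun m : ℕ => ‖slAct (windowProd f (-m) m)⁻¹ u‖) atTop (𝓝 0)) :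
    wedge v (slAct x u) ≠ 0 := by
  intro hpar
  have hright' : Tendsto (fun m : ℕ => ‖slAct (windowProd f 1 m) (slAct x u)‖) atTop (𝓝 0) := by
    refine squeeze_zero (fun _ => norm_nonneg _) (fun m => ?_)
      (by simpa using hright.const_mul ‖slAct x u‖)
    simpa [hpar] using norm_slAct_le_add_abs_wedge_mul (windowProd f 1 m) hv (slAct x u)
  have hleft' : Tendsto (fun m : ℕ => slNorm x * ‖slAct (windowProd f (-m) m)⁻¹ u‖)
      atTop (𝓝 0) := by simpa using hleft.const_mul (slNorm x)
  have hη : 0 < ‖u‖ / 3 := by positivity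
  obtain ⟨M, hM⟩ := eventually_atTop.mp
    ((hright'.eventually_le_const hη).and (hleft'.eventually_le_const hη))
  obtain ⟨k, hMk, rfl⟩ := frequently_atTop.mp hx M
  have hL := lt_blockPeriod hn k
  set P := blockProd f n k
  have hPu : ‖slAct (P * X k) u‖ ≤ ‖u‖ / 3 := by
    rw [slAct_mul]
    exact (hM (blockPeriod n k - 1) (by omega)).1
  have hPPu : ‖slAct (P * X k) (slAct (P * X k) u)‖ ≤ ‖u‖ / 3 := by
    rw [slAct_mul P _ u, ← slAct_mul, ← hf.windowProd_eq_blockProd_mul_mul_blockProd hn]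
    exact (hM _ (by omega)).1
  have hPinv : ‖slAct (P * X k)⁻¹ u‖ ≤ ‖u‖ / 3 := by
    have h := (hM (blockPeriod n k - 1) (by omega)).2
    rw [hf.windowProd_neg_eq_blockProd hn] at h
    rw [mul_inv_rev, slAct_mul]
    exact (norm_slAct_le _ _).trans (by rwa [slNorm_inv])
  linarith [norm_le_two_mul_of_slAct_le hPu hPinv hPPu]

theorem IsToeplitzSeq.exists_le_logNorm_windowProd (hf : IsToeplitzSeq X n f) (hn : ∀ k, 2 ≤ n k)
    (hfin : (Set.range X).Finite) (h0 : f 0 ∈ Set.range X) {u v : ℝ²} (hv : ‖v‖ = 1)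
    (hu : ‖u‖ = 1) (hwedge : ∀ x ∈ Set.range X, wedge v (slAct x u) ≠ 0) {c D E : ℝ}
    (hD : ∀ m : ℕ, ‖slAct (windowProd f 1 m) v‖ ≤ D * Real.exp (-c * m))
    (hE : ∀ m : ℕ, ‖slAct (windowProd f (-m) m)⁻¹ u‖ ≤ E * Real.exp (-c * m)) :
    ∃ C, ∀ (i : ℤ) (m : ℕ), c * m - C ≤ logNorm (windowProd f i m) := by
  have hD0 : 0 < D := one_pos.trans_le (by simpa [slAct_one, hv] using hD 0)
  have hE0 : 0 < E := one_pos.trans_le (by simpa [slAct_one, hu] using hE 0)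
  obtain ⟨x₀, hx₀, hmin⟩ := Set.exists_min_image (Set.range X) (fun x => |wedge v (slAct x u)|)
    hfin (Set.range_nonempty X)
  set α := |wedge v (slAct x₀ u)|
  have hα : 0 < α := abs_pos.mpr (hwedge x₀ hx₀)
  refine ⟨|c| + |Real.log (α / (D * E))|, fun i m => ?_⟩
  rcases m.eq_zero_or_pos with rfl | hm
  · have := abs_nonneg (Real.log (α / (D * E)))
    simp only [windowProd_zero, logNorm_one, Nat.cast_zero]
    linarith [abs_nonneg c]
  obtain ⟨x, hx, l, r, rfl, hprod⟩ := hf.exists_windowProd_eq hn h0 i hm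
  rw [hprod]
  set g := windowProd f 1 r
  set h := windowProd f (-l) l
  have hexp : α ≤ D * E * Real.exp (logNorm (g * x * h) - c * (l + r)) :=
    calc α ≤ ‖slAct g v‖ * (slNorm (g * x * h) * ‖slAct h⁻¹ u‖) :=
          (hmin x hx).trans (abs_wedge_slAct_le _ _ _ _ _)
      _ ≤ D * Real.exp (-c * r) * (slNorm (g * x * h) * (E * Real.exp (-c * l))) := by
          have := (slNorm_pos (g * x * h)).le
          gcongr
          exacts [hD r, hE l]
      _ = D * E * Real.exp (logNorm (g * x * h) - c * (l + r)) := by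
          rw [← exp_logNorm, sub_eq_add_neg, Real.exp_add, ← neg_mul, mul_add, Real.exp_add]
          ring
  have hlog := (Real.log_le_iff_le_exp (by positivity)).mpr
    ((div_le_iff₀' (by positivity)).mpr hexp)
  push_cast
  linarith [neg_abs_le (Real.log (α / (D * E))), le_abs_self c]

end Transversality

/-- `F` has Lyapunov exponent `Λ`, uniformly in the starting point of the product. -/
def HasUniformGrowth (F : ℤ → SL2) (Λ : ℝ) : Prop :=
  ∀ ε > 0, ∃ C, ∀ (i : ℤ) (m : ℕ), |logNorm (windowProd F i m) - Λ * m| ≤ ε * m + C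

namespace IsBlockExponent

variable {X : ℕ → SL2} {n : ℕ → ℕ} {f : ℤ → SL2} {κ Λ : ℝ}
variable (hΛ : IsBlockExponent f n κ Λ) (hn : ∀ k, 2 ≤ n k) (hf : IsToeplitzSeq X n f)
variable (hκ : ∀ i, logNorm (f i) ≤ κ)

include hΛ hn hf hκ

theorem exists_unit_norm_slAct_windowProd_one_le {c : ℝ} (hc0 : 0 < c) (hc : c < Λ) :
    ∃ v : ℝ², ‖v‖ = 1 ∧
      ∃ D, ∀ m : ℕ, ‖slAct (windowProd f 1 m) v‖ ≤ D * Real.exp (-c * m) := by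
  set δ := (Λ - c) / 3 with hδ
  have hδ0 : 0 < δ := div_pos (sub_pos.mpr hc) three_pos
  obtain ⟨C₁, hC₁⟩ := hΛ.exists_logNorm_windowProd_le hn hf hκ (lt_add_of_pos_right Λ hδ0)
  obtain ⟨C₂, hC₂⟩ := hΛ.exists_le_logNorm_windowProd_one hn hf hκ (sub_lt_self Λ hδ0)
  have hrate : 2 * (Λ - δ) - (Λ + δ) = c := by rw [hδ]; ring
  rw [← hrate]
  refine exists_unit_norm_slAct_le_exp (κ := κ) (C := max C₁ C₂) (by linarith) (fun m => ?_)
    (fun m => ?_) fun m => ?_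
  · rw [windowProd_succ, mul_inv_cancel_right]; exact hκ _
  · linarith [hC₂ m, le_max_right C₁ C₂]
  · linarith [hC₁ 1 m, le_max_left C₁ C₂]

variable (hfin : (Set.range X).Finite) (hrec : ∀ x ∈ Set.range X, ∃ᶠ k in atTop, X k = x)
  (h0 : f 0 ∈ Set.range X)

include hfin hrec h0

theorem exists_le_logNorm_windowProd {c : ℝ} (hc : c < Λ) :
    ∃ C, ∀ (i : ℤ) (m : ℕ), c * m - C ≤ logNorm (windowProd f i m) := by
  rcases le_or_gt c 0 with hc0 | hc0
  · refine ⟨0, fun i m => ?_⟩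
    linarith [logNorm_nonneg (windowProd f i m), mul_nonpos_of_nonpos_of_nonneg hc0 m.cast_nonneg]
  obtain ⟨v, hv, D, hD⟩ := hΛ.exists_unit_norm_slAct_windowProd_one_le hn hf hκ hc0 hc
  obtain ⟨u, hu, E, hE⟩ := (hΛ.inv_comp_neg hn hf).exists_unit_norm_slAct_windowProd_one_le hn
    hf.inv_comp_neg (fun i => (logNorm_inv _).trans_le (hκ (-i))) hc0 hc
  simp only [windowProd_inv_comp_neg, sub_self, zero_sub] at hE
  have hdecay (B : ℝ) : Tendsto (fun m : ℕ => B * Real.exp (-c * m)) atTop (𝓝 0) := by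
    simpa using (Real.tendsto_exp_atBot.comp (tendsto_natCast_atTop_atTop.const_mul_atTop_of_neg
      (neg_neg_of_pos hc0))).const_mul B
  refine hf.exists_le_logNorm_windowProd hn hfin h0 hv hu (fun x hx => ?_) hD hE
  exact hf.wedge_slAct_ne_zero hn (hrec x hx) (norm_pos_iff.mp (hu ▸ one_pos)) hv
    (squeeze_zero (fun _ => norm_nonneg _) hD (hdecay D))
    (squeeze_zero (fun _ => norm_nonneg _) hE (hdecay E))

theorem hasUniformGrowth : HasUniformGrowth f Λ := by
  intro ε hε
  obtain ⟨C₁, hC₁⟩ := hΛ.exists_logNorm_windowProd_le hn hf hκ (lt_add_of_pos_right Λ hε)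
  obtain ⟨C₂, hC₂⟩ := hΛ.exists_le_logNorm_windowProd hn hf hκ hfin hrec h0 (sub_lt_self Λ hε)
  refine ⟨max C₁ C₂, fun i m => abs_sub_le_iff.mpr ⟨?_, ?_⟩⟩
  · linarith [hC₁ i m, le_max_left C₁ C₂]
  · linarith [hC₂ i m, le_max_right C₁ C₂]

end IsBlockExponent

theorem IsToeplitzSeq.exists_hasUniformGrowth {X : ℕ → SL2} {n : ℕ → ℕ} {f : ℤ → SL2}
    (hf : IsToeplitzSeq X n f) (hn : ∀ k, 2 ≤ n k) (hfin : (Set.range X).Finite)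
    (hrec : ∀ x ∈ Set.range X, ∃ᶠ k in atTop, X k = x) (h0 : f 0 ∈ Set.range X) :
    ∃ Λ, HasUniformGrowth f Λ := by
  obtain ⟨κ, hκ⟩ := (hfin.image logNorm).bddAbove
  have hfκ (i : ℤ) : logNorm (f i) ≤ κ := by
    rcases eq_or_ne i 0 with rfl | hi
    exacts [hκ (Set.mem_image_of_mem _ h0), hκ (Set.mem_image_of_mem _ (hf.apply_mem_range hn hi))]
  obtain ⟨Λ, hΛ⟩ := exists_isBlockExponent f n ((logNorm_nonneg _).trans (hfκ 0))
  exact ⟨Λ, hΛ.hasUniformGrowth hn hf hfκ hfin hrec h0⟩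

theorem HasUniformGrowth.of_windowProd {F : ℤ → SL2} {κ Λ : ℝ} (hF : ∀ i, logNorm (F i) ≤ κ)
    {o : ℤ} {L : ℕ} (hL : 0 < L) (h : HasUniformGrowth (fun j => windowProd F (j * L + o) L) Λ) :
    HasUniformGrowth F (Λ / L) := by
  intro ε hε
  have : (0 : ℝ) < L := Nat.cast_pos.mpr hL
  obtain ⟨C, hC⟩ := h (ε * L) (by positivity)
  refine ⟨2 * L * κ + C + 2 * L * ε + |Λ / L| * (2 * L), fun i m => ?_⟩
  obtain ⟨j, t, hm, hlog⟩ := exists_aligned_window hF hL o i m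
  have hblocks := hC j t
  rw [windowProd_windowProd] at hblocks
  have hlen : |Λ * t - Λ / L * m| ≤ |Λ / L| * (2 * L) := by
    rw [show Λ * t - Λ / L * m = -(Λ / L * (m - t * L)) by field_simp; ring, abs_neg, abs_mul]
    gcongr
  have hεm := mul_le_mul_of_nonneg_left (neg_le_of_abs_le hm) hε.le
  rw [abs_le] at *
  constructor <;> linarith

theorem HasUniformGrowth.isUniform {𝒜 : Type*} {Ω : Set (ℤ → 𝒜)} {A : (ℤ → 𝒜) → SL2}
    {F : ℤ → SL2} {Λ : ℝ} (hF : HasUniformGrowth F Λ)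
    (hA : ∀ ω ∈ Ω, ∀ m : ℕ, ∃ i, cocycleP A m ω = windowProd F i m) : IsUniform Ω A := by
  refine ⟨Λ, Metric.tendstoUniformlyOn_iff.mpr fun ε hε => ?_⟩
  obtain ⟨C, hC⟩ := hF (ε / 2) (half_pos hε)
  have hlarge : ∀ᶠ m : ℕ in atTop, C < ε / 2 * m :=
    (tendsto_natCast_atTop_atTop.const_mul_atTop (half_pos hε)).eventually_gt_atTop C
  filter_upwards [hlarge, eventually_gt_atTop 0] with m hm hm0 ω hω
  have hm0' : (0 : ℝ) < m := Nat.cast_pos.mpr hm0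
  obtain ⟨i, hi⟩ := hA ω hω m
  have hcocycle : cocycle A m ω = windowProd F i m := by simp [cocycle, hi]
  rw [dist_comm, Real.dist_eq, hcocycle, ← logNorm, div_sub' hm0'.ne', abs_div,
    abs_of_pos hm0', div_lt_iff₀ hm0', mul_comm (m : ℝ)]
  linarith [hC i m]

/-! ### The subshift and locally constant cocycles -/

theorem exists_isToeplitzSeq {α : Type*} (a : ℕ → α) (n : ℕ → ℕ) : ∃ q, IsToeplitzSeq a n q := by
  refine ⟨fun i => a (sInf {k | ¬ (blockPeriod n (k + 1) : ℤ) ∣ i}), fun k i h1 h2 => ?_⟩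
  refine congrArg a (le_antisymm (Nat.sInf_le h2) (le_csInf ⟨k, h2⟩ fun l hl => ?_))
  by_contra! hlk
  exact hl ((Int.natCast_dvd_natCast.mpr (blockPeriod_dvd hlk)).trans h1)

section Word

variable {𝒜 : Type*}

theorem word_eq_map (ω : ℤ → 𝒜) (i : ℤ) (m : ℕ) :
    word ω i m = (List.range m).map fun t : ℕ => ω (i + t) := by
  simp only [word, List.pure_def, List.bind_eq_flatMap, ← List.map_eq_flatMap, List.map_map]
  rfl

theorem length_word (ω : ℤ → 𝒜) (i : ℤ) (m : ℕ) : (word ω i m).length = m := by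
  rw [word_eq_map, List.length_map, List.length_range]

theorem word_eq_word_iff {ω ρ : ℤ → 𝒜} {i j : ℤ} {m : ℕ} :
    word ω i m = word ρ j m ↔ ∀ t < m, ω (i + t) = ρ (j + t) := by
  simp only [word_eq_map, List.map_inj_left, List.mem_range]

theorem word_one (ω : ℤ → 𝒜) (i : ℤ) : word ω i 1 = [ω i] := by simp [word_eq_map]

theorem word_add (ω : ℤ → 𝒜) (i : ℤ) (l m : ℕ) :
    word ω i (l + m) = word ω i l ++ word ω (i + l) m := by
  simp only [word_eq_map, List.range_add, List.map_append, List.map_map]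
  simp [Function.comp_def, add_assoc]

end Word

section Toeplitz

variable {𝒜 : Type*} {a : ℕ → 𝒜} {n : ℕ → ℕ} {q p : ℤ → 𝒜}

theorem IsToeplitzSeq.word_mul_blockPeriod (hq : IsToeplitzSeq a n q) (hn : ∀ k, 2 ≤ n k) {k j : ℕ}
    (hj : j < n k) : word q 1 (j * blockPeriod n k + (blockPeriod n k - 1)) =
      sepJoin (word q 1 (blockPeriod n k - 1)) (a k) (j + 1) := by
  have hL := blockPeriod_pos hn k
  induction j with
  | zero => simp [sepJoin]
  | succ j ih =>
    have hlen : (j + 1) * blockPeriod n k + (blockPeriod n k - 1) =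
        j * blockPeriod n k + (blockPeriod n k - 1) + 1 + (blockPeriod n k - 1) := by
      rw [add_mul, one_mul]; omega
    have hpos : (1 + (j * blockPeriod n k + (blockPeriod n k - 1) : ℕ) : ℤ) =
        ((j + 1) * blockPeriod n k : ℕ) := by
      rw [add_mul, one_mul]; omega
    have hblock : word q (((j + 1) * blockPeriod n k : ℕ) + 1) (blockPeriod n k - 1) =
        word q 1 (blockPeriod n k - 1) := word_eq_word_iff.mpr fun t ht => by
      rw [add_assoc]
      refine hq.apply_add (Int.natCast_dvd_natCast.mpr (dvd_mul_left _ _)) fun hdvd => ?_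
      have := Int.le_of_dvd (by omega) hdvd
      omega
    rw [hlen, word_add, word_add, word_one, Nat.cast_succ, ← add_assoc, hpos, hblock,
      hq.apply_mul_blockPeriod hn j.succ_pos hj, ih (by omega)]
    simp [sepJoin, List.replicate_succ', List.append_assoc]

theorem IsToeplitzSeq.word_eq_Blk (hq : IsToeplitzSeq a n q) (hn : ∀ k, 2 ≤ n k) (k : ℕ) :
    word q 1 (blockPeriod n k - 1) = Blk a n k := by
  induction k with
  | zero => rfl
  | succ k ih =>
    obtain ⟨m, hm⟩ : ∃ m, n k = m + 1 :=
      Nat.exists_eq_add_one_of_ne_zero (two_pos.trans_le (hn k)).ne'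
    have hL := blockPeriod_pos hn k
    have hlen : blockPeriod n (k + 1) - 1 = m * blockPeriod n k + (blockPeriod n k - 1) := by
      rw [blockPeriod_succ, hm, mul_comm, add_mul, one_mul]
      omega
    rw [hlen, hq.word_mul_blockPeriod hn (by omega), ih, Blk, hm]

theorem IsBlockInf.apply_eq (hp : IsBlockInf a n p) (hq : IsToeplitzSeq a n q)
    (hn : ∀ k, 2 ≤ n k) {i : ℤ} (hi : 1 ≤ i) : p i = q i := by
  obtain ⟨m, rfl⟩ := Int.exists_add_of_le hi
  have hprefix := hp (m + 1)
  rw [← hq.word_eq_Blk hn, length_word, word_eq_word_iff] at hprefix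
  exact hprefix m (Nat.lt_sub_of_add_lt (lt_blockPeriod hn (m + 1)))

theorem exists_apply_add_eq_of_mem_toeplitzΩ (hp : IsBlockInf a n p) (hq : IsToeplitzSeq a n q)
    (hn : ∀ k, 2 ≤ n k) {ω : ℤ → 𝒜} (hω : ω ∈ toeplitzΩ p) (i : ℤ) (m : ℕ) :
    ∃ l : ℤ, ∀ t < m, ω (i + t) = q (l + t) := by
  obtain ⟨l, hl, hword⟩ := hω i m
  refine ⟨l, fun t ht => ?_⟩
  rw [word_eq_word_iff.mp hword t ht, hp.apply_eq hq hn (by omega)]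

theorem shift_mem_toeplitzΩ {ω : ℤ → 𝒜} (hω : ω ∈ toeplitzΩ p) (s : ℤ) :
    shift s ω ∈ toeplitzΩ p := by
  intro i m
  obtain ⟨l, hl, hword⟩ := hω (i + s) m
  refine ⟨l, hl, hword ▸ word_eq_word_iff.mpr fun t _ => ?_⟩
  rw [shift, add_right_comm]

theorem mem_evAlph_iff {x : 𝒜} : x ∈ EvAlph a ↔ ∃ᶠ k in atTop, a k = x := frequently_atTop.symm

theorem eventually_mem_evAlph [Finite 𝒜] (a : ℕ → 𝒜) : ∀ᶠ k in atTop, a k ∈ EvAlph a := by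
  have hleave (x : 𝒜) : ∀ᶠ k in atTop, x ∉ EvAlph a → a k ≠ x := by
    by_cases hx : x ∈ EvAlph a
    · exact Eventually.of_forall fun _ h => absurd hx h
    · exact (not_frequently.mp (mt mem_evAlph_iff.mpr hx)).mono fun _ h _ => h
  filter_upwards [eventually_all.mpr hleave] with k hk
  exact by_contra fun h => hk _ h rfl

theorem frequently_apply_add_eq_of_mem_evAlph {x : 𝒜} (hx : x ∈ EvAlph a) (k : ℕ) :
    ∃ᶠ l in atTop, a (k + l) = x := by
  refine frequently_atTop.mpr fun K => ?_
  obtain ⟨k', hk', hx'⟩ := hx (k + K)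
  exact ⟨k' - k, by omega, by rwa [Nat.add_sub_of_le (by omega)]⟩

end Toeplitz

section SlidingBlock

variable {𝒜 : Type*} {N : ℕ}

/-- The sliding block code with local rule `g`: its value at `i` is `g` applied to the letters of
`ω` in the window of radius `N` around `i`. -/
def slidingBlock {β : Type*} (g : (Set.Icc (-N : ℤ) N → 𝒜) → β) (ω : ℤ → 𝒜) (i : ℤ) : β :=
  g fun t => ω (i + t)

theorem slidingBlock_congr {β : Type*} (g : (Set.Icc (-N : ℤ) N → 𝒜) → β) {ω ρ : ℤ → 𝒜} {i j : ℤ}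
    (h : ∀ t : ℤ, -N ≤ t → t ≤ N → ω (i + t) = ρ (j + t)) :
    slidingBlock g ω i = slidingBlock g ρ j :=
  congrArg g (funext fun t => h t t.2.1 t.2.2)

theorem LocConstOn.exists_slidingBlock {β : Type*} [Nonempty β] {Ω : Set (ℤ → 𝒜)}
    {A : (ℤ → 𝒜) → β} (hA : LocConstOn Ω A) :
    ∃ (N : ℕ) (g : (Set.Icc (-N : ℤ) N → 𝒜) → β), ∀ ω ∈ Ω, A ω = slidingBlock g ω 0 := by
  obtain ⟨N, hN⟩ := hA
  let restrict (ω : Ω) (t : Set.Icc (-N : ℤ) N) : 𝒜 := ω.1 (0 + t)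
  have hfactors : Function.FactorsThrough (fun ω : Ω => A ω) restrict := fun ω ρ h =>
    hN ω ω.2 ρ ρ.2 fun i hi => by simpa [restrict] using congrFun h ⟨i, abs_le.mp hi⟩
  refine ⟨N, Function.extend restrict (fun ω : Ω => A ω) fun _ => Classical.arbitrary β, ?_⟩
  exact fun ω hω => (hfactors.extend_apply _ ⟨ω, hω⟩).symm

theorem cocycleP_eq_windowProd {Ω : Set (ℤ → 𝒜)} {A : (ℤ → 𝒜) → SL2}
    {g : (Set.Icc (-N : ℤ) N → 𝒜) → SL2} (hA : ∀ ω ∈ Ω, A ω = slidingBlock g ω 0) {ω : ℤ → 𝒜}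
    (hω : ∀ s : ℤ, shift s ω ∈ Ω) (m : ℕ) : cocycleP A m ω = windowProd (slidingBlock g ω) 0 m := by
  induction m with
  | zero => rfl
  | succ m ih =>
    rw [cocycleP, windowProd_succ, ih, hA _ (hω m)]
    congr 1
    exact slidingBlock_congr g fun t _ _ => by rw [shift]; ring_nf

variable {a : ℕ → 𝒜} {n : ℕ → ℕ} {q p : ℤ → 𝒜}

theorem exists_cocycleP_eq_windowProd (hp : IsBlockInf a n p) (hq : IsToeplitzSeq a n q)
    (hn : ∀ k, 2 ≤ n k) {A : (ℤ → 𝒜) → SL2} {g : (Set.Icc (-N : ℤ) N → 𝒜) → SL2}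
    (hA : ∀ ω ∈ toeplitzΩ p, A ω = slidingBlock g ω 0) {ω : ℤ → 𝒜} (hω : ω ∈ toeplitzΩ p) (m : ℕ) :
    ∃ i, cocycleP A m ω = windowProd (slidingBlock g q) i m := by
  obtain ⟨l, hl⟩ := exists_apply_add_eq_of_mem_toeplitzΩ hp hq hn hω (-N) (m + 2 * N)
  refine ⟨l + N, ?_⟩
  rw [cocycleP_eq_windowProd hA (shift_mem_toeplitzΩ hω)]
  refine windowProd_congr fun s hs => slidingBlock_congr g fun t hNt htN => ?_
  obtain ⟨r, hr⟩ := Int.eq_ofNat_of_zero_le (by omega : 0 ≤ s + t + N)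
  convert hl r (by omega) using 2 <;> omega

theorem IsToeplitzSeq.windowProd_slidingBlock (hq : IsToeplitzSeq a n q) {G : Type*} [Monoid G]
    (g : (Set.Icc (-N : ℤ) N → 𝒜) → G) {k : ℕ} (hk : 2 * N + 2 ≤ blockPeriod n k) (j : ℤ) :
    windowProd (slidingBlock g q) (j * blockPeriod n k + -(N + 1)) (blockPeriod n k) =
      windowProd (slidingBlock g (Function.update q 0 (q (j * blockPeriod n k)))) (-(N + 1))
        (blockPeriod n k) := by
  refine windowProd_congr fun s hs => slidingBlock_congr g fun t hNt htN => ?_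
  rw [add_assoc (j * _ : ℤ), add_assoc (j * _ : ℤ)]
  rcases eq_or_ne (-(N + 1) + s + t : ℤ) 0 with h | h
  · rw [h, add_zero, Function.update_self]
  · rw [Function.update_of_ne h]
    exact hq.apply_add (dvd_mul_left _ _) fun hdvd =>
      h (Int.eq_zero_of_abs_lt_dvd hdvd (abs_lt.mpr (by omega)))

-- Cut at the multiples of a large period, the product becomes a product along the derived Toeplitz
-- sequence, whose letters are images of single letters of the eventual alphabet.
theorem IsToeplitzSeq.exists_hasUniformGrowth_slidingBlock [Finite 𝒜] (hq : IsToeplitzSeq a n q)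
    (hn : ∀ k, 2 ≤ n k) (h0 : q 0 ∈ EvAlph a) (g : (Set.Icc (-N : ℤ) N → 𝒜) → SL2) :
    ∃ Λ, HasUniformGrowth (slidingBlock g q) Λ := by
  obtain ⟨k₀, hk₀⟩ := eventually_atTop.mp (eventually_mem_evAlph a)
  set k := max k₀ (2 * N + 2)
  have hL : 2 * N + 2 ≤ blockPeriod n k := (le_max_right _ _).trans (lt_blockPeriod hn k).le
  let M (x : 𝒜) : SL2 :=
    windowProd (slidingBlock g (Function.update q 0 x)) (-(N + 1)) (blockPeriod n k)
  have hM : (fun j : ℤ => windowProd (slidingBlock g q) (j * blockPeriod n k + -(N + 1))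
      (blockPeriod n k)) = M ∘ fun j : ℤ => q (j * blockPeriod n k) :=
    funext (hq.windowProd_slidingBlock g hL)
  have hrec : ∀ x ∈ Set.range fun l => M (a (k + l)), ∃ᶠ l in atTop, M (a (k + l)) = x := by
    rintro _ ⟨l, rfl⟩
    have hmem := hk₀ (k + l) ((le_max_left _ _).trans (Nat.le_add_right k l))
    exact (frequently_apply_add_eq_of_mem_evAlph hmem k).mono fun _ => congrArg M
  have hM0 : M (q (0 * blockPeriod n k)) ∈ Set.range fun l => M (a (k + l)) := by
    obtain ⟨l, hl⟩ := (frequently_apply_add_eq_of_mem_evAlph h0 k).exists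
    exact ⟨l, congrArg M (by rw [zero_mul, hl])⟩
  obtain ⟨Λ, hΛ⟩ := ((hq.comp_mul hn k).comp M).exists_hasUniformGrowth (fun l => hn (k + l))
    ((Set.finite_range M).subset (Set.range_comp_subset_range _ M)) hrec hM0
  obtain ⟨κ, hκ⟩ := (Set.finite_range fun w => logNorm (g w)).bddAbove
  exact ⟨Λ / blockPeriod n k, HasUniformGrowth.of_windowProd (fun i => hκ ⟨_, rfl⟩)
    (blockPeriod_pos hn k) (hM ▸ hΛ)⟩

end SlidingBlock

/-- Every locally constant `SL(2,ℝ)`-valued function on a simple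
Toeplitz subshift whose eventual alphabet has at least two letters is uniform. -/
theorem statement16 {𝒜 : Type*} [Fintype 𝒜]
    (a : ℕ → 𝒜) (nseq : ℕ → ℕ) (ha : ∀ k, a (k + 1) ≠ a k) (hn : ∀ k, 2 ≤ nseq k)
    (p : ℤ → 𝒜) (hp : IsBlockInf a nseq p)
    (hcard : ∃ x y : 𝒜, x ∈ EvAlph a ∧ y ∈ EvAlph a ∧ x ≠ y)
    (A : (ℤ → 𝒜) → SL2) (hA : LocConstOn (toeplitzΩ p) A) :
    IsUniform (toeplitzΩ p) A := by
  obtain ⟨N, g, hg⟩ := hA.exists_slidingBlock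
  obtain ⟨q, hq⟩ := exists_isToeplitzSeq a nseq
  obtain ⟨k, hk⟩ := (eventually_mem_evAlph a).exists
  have hq' := hq.update_zero (a k)
  obtain ⟨Λ, hΛ⟩ := hq'.exists_hasUniformGrowth_slidingBlock hn (by rwa [Function.update_self]) g
  exact hΛ.isUniform fun ω hω m => exists_cocycleP_eq_windowProd hp hq' hn hg hω m
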